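/- arXiv:1411.1227 — 4 statements merged into one kernel-verified Lean document; each statement's English description precedes it below -/
import Mathlib

section
/- The saturated homogeneous ideal of the 7 points [1,0,0], [0,1,0], [0,0,1], [1,1,0], [1,0,1], [0,1,1], [1,1,1] in P^2 is generated by 3 cubic forms. -/
/-!
Let `v` be a 0/1 vector with support `S`. Restricting a polynomial to the line through `v` keeps
exactly the monomials supported in `S` and remembers only their degrees. By inclusion-exclusion, a
polynomial vanishing on all these lines has coefficient sum zero over each class of monomials with
a given support and a given degree. On the other hand, modulo the cubics `xᵢxⱼ(xᵢ - xⱼ)` all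
monomials of such a class agree, because each `xᵢ - xⱼ` with `i, j ∈ S` annihilates `∏ k ∈ S, xₖ`.
Hence the polynomial lies in the ideal of the cubics. With three variables there are seven nonzero
0/1 vectors and, up to sign, three nonzero cubics.
-/

open MvPolynomial

/-- The seven points of `ℙ²`. -/
def sevenPoints : Fin 7 → (Fin 3 → ℚ) :=
  ![![1, 0, 0], ![0, 1, 0], ![0, 0, 1], ![1, 1, 0], ![1, 0, 1], ![0, 1, 1], ![1, 1, 1]]

theorem eq_zero_of_sum_powerset_eq_zero {α M : Type*} [AddCommMonoid M] {c : Finset α → M}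
    (hc : ∀ S : Finset α, ∑ T ∈ S.powerset, c T = 0) (S : Finset α) : c S = 0 := by
  classical
  induction S using Finset.strongInduction with
  | H S ih =>
    rw [← hc S]
    refine (Finset.sum_eq_single_of_mem S (Finset.mem_powerset_self S) fun T hT hne => ?_).symm
    exact ih T ((Finset.mem_powerset.mp hT).ssubset_of_ne hne)

theorem sum_smul_mem_of_sum_fiber_eq_zero {ι κ R M : Type*} [DecidableEq κ] [Ring R]
    [AddCommGroup M] [Module R M] {N : Submodule R M} {f : ι → κ} {m : ι → M}
    (hm : ∀ a b, f a = f b → m a - m b ∈ N) {A : Finset ι} {c : ι → R}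
    (hc : ∀ k, ∑ a ∈ A with f a = k, c a = 0) : ∑ a ∈ A, c a • m a ∈ N := by
  rw [← Finset.sum_fiberwise_of_maps_to fun _ => Finset.mem_image_of_mem f]
  refine N.sum_mem fun k hk => ?_
  obtain ⟨b, -, rfl⟩ := Finset.mem_image.mp hk
  have hsub : ∑ a ∈ A with f a = f b, c a • m a = ∑ a ∈ A with f a = f b, c a • (m a - m b) := by
    simp only [smul_sub, Finset.sum_sub_distrib, ← Finset.sum_smul, hc, zero_smul, sub_zero]
  rw [hsub]
  exact N.sum_mem fun a ha => N.smul_mem _ (hm a b (Finset.mem_filter.mp ha).2)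

theorem prod_pow_sub_pow_sum_mem {ι A : Type*} [CommRing A] {I : Ideal A} {S : Finset ι}
    {x : ι → A} {a : A} {e : ι → ℕ} (h : ∀ k ∈ S, x k - a ∈ I) :
    ∏ k ∈ S, x k ^ e k - a ^ ∑ k ∈ S, e k ∈ I := by
  rw [← Ideal.Quotient.mk_eq_mk_iff_sub_mem, ← Finset.prod_pow_eq_pow_sum, map_prod, map_prod]
  refine Finset.prod_congr rfl fun k hk => ?_
  rw [map_pow, map_pow, (Ideal.Quotient.mk_eq_mk_iff_sub_mem _ _).mpr (h k hk)]

theorem prod_indicator_one_pow {σ M : Type*} [DecidableEq σ] [CommMonoidWithZero M]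
    (S : Finset σ) (s : σ →₀ ℕ) :
    (s.prod fun j k => (S : Set σ).indicator (1 : σ → M) j ^ k) =
      if s.support ⊆ S then 1 else 0 := by
  split_ifs with h
  · refine Finset.prod_eq_one fun j hj => ?_
    simp only [Set.indicator_of_mem (Finset.mem_coe.mpr (h hj)), Pi.one_apply, one_pow]
  · obtain ⟨j, hj, hjS⟩ := Finset.not_subset.mp h
    refine Finset.prod_eq_zero hj ?_
    simp only [Set.indicator_of_notMem (Finset.mem_coe.not.mpr hjS),
      zero_pow (Finsupp.mem_support_iff.mp hj)]

section PairCubic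

variable {σ R : Type*} [CommRing R]

variable (R) in
/-- The cubic form `xᵢxⱼ(xᵢ - xⱼ)`, which vanishes at every point with coordinates in `{0, 1}`. -/
noncomputable def pairCubic (i j : σ) : MvPolynomial σ R :=
  X i * X j * (X i - X j)

variable (σ R) in
/-- The ideal generated by the cubic forms `xᵢxⱼ(xᵢ - xⱼ)`, over all pairs of variables. -/
noncomputable def pairCubicIdeal : Ideal (MvPolynomial σ R) :=
  Ideal.span (Set.range fun ij : σ × σ => pairCubic R ij.1 ij.2)

theorem isHomogeneous_pairCubic (i j : σ) : (pairCubic R i j).IsHomogeneous 3 :=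
  ((isHomogeneous_X R i).mul (isHomogeneous_X R j)).mul
    ((isHomogeneous_X R i).sub (isHomogeneous_X R j))

theorem pairCubic_mem_pairCubicIdeal (i j : σ) : pairCubic R i j ∈ pairCubicIdeal σ R :=
  Ideal.subset_span ⟨(i, j), rfl⟩

theorem pairCubicIdeal_fin_three :
    pairCubicIdeal (Fin 3) R =
      Ideal.span (Set.range fun k : Fin 3 => pairCubic R (k + 1) (k + 2)) := by
  refine le_antisymm (Ideal.span_le.mpr ?_) (Ideal.span_le.mpr ?_)
  · have hself (i : Fin 3) : pairCubic R i i = 0 := by rw [pairCubic, sub_self, mul_zero]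
    have hswap (i j : Fin 3) : pairCubic R j i = -pairCubic R i j := by
      simp only [pairCubic]
      ring
    have hgen (k : Fin 3) : pairCubic R (k + 1) (k + 2) ∈
        Ideal.span (Set.range fun k : Fin 3 => pairCubic R (k + 1) (k + 2)) :=
      Ideal.subset_span ⟨k, rfl⟩
    rintro _ ⟨⟨i, j⟩, rfl⟩
    obtain rfl | ⟨k, ⟨rfl, rfl⟩ | ⟨rfl, rfl⟩⟩ :
        i = j ∨ ∃ k, i = k + 1 ∧ j = k + 2 ∨ i = k + 2 ∧ j = k + 1 := by
      decide +revert
    · simp only [hself, SetLike.mem_coe, zero_mem]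
    · exact hgen k
    · simpa only [hswap (k + 1), SetLike.mem_coe, neg_mem_iff] using hgen k
  · rintro _ ⟨k, rfl⟩
    exact pairCubic_mem_pairCubicIdeal _ _

theorem X_sub_X_mul_prod_mem_pairCubicIdeal {S : Finset σ} {i j : σ} (hi : i ∈ S) (hj : j ∈ S) :
    (X i - X j) * ∏ k ∈ S, X k ∈ pairCubicIdeal σ R := by
  classical
  obtain rfl | hij := eq_or_ne i j
  · simp only [sub_self, zero_mul, zero_mem]
  · have hdvd : pairCubic R i j ∣ (X i - X j) * ∏ k ∈ S, X k := by
      have hpair : (X i * X j : MvPolynomial σ R) ∣ ∏ k ∈ S, X k := by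
        rw [← Finset.prod_pair hij]
        exact Finset.prod_dvd_prod_of_subset _ _ _ (Finset.insert_subset hi (by simpa using hj))
      rw [pairCubic, mul_comm]
      exact mul_dvd_mul_left _ hpair
    exact Ideal.mem_of_dvd _ hdvd (pairCubic_mem_pairCubicIdeal i j)

theorem monomial_sub_prod_mul_pow_mem_pairCubicIdeal {s : σ →₀ ℕ} {i : σ} (hi : i ∈ s.support) :
    monomial s 1 - (∏ k ∈ s.support, X k) * X i ^ (s.degree - s.support.card) ∈
      pairCubicIdeal σ R := by
  have hmonomial : monomial s (1 : R) =
      (∏ k ∈ s.support, X k) * ∏ k ∈ s.support, X k ^ (s k - 1) := by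
    rw [monomial_eq, C_1, one_mul, Finsupp.prod, ← Finset.prod_mul_distrib]
    refine Finset.prod_congr rfl fun k hk => ?_
    rw [mul_pow_sub_one (Finsupp.mem_support_iff.mp hk)]
  have hdegree : ∑ k ∈ s.support, (s k - 1) = s.degree - s.support.card := by
    rw [Finset.sum_tsub_distrib _ fun k hk => Nat.one_le_iff_ne_zero.mpr
      (Finsupp.mem_support_iff.mp hk), ← Finset.card_eq_sum_ones, Finsupp.degree_apply]
  have hcolon : ∏ k ∈ s.support, X k ^ (s k - 1) - X i ^ ∑ k ∈ s.support, (s k - 1) ∈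
      (pairCubicIdeal σ R).colon {∏ k ∈ s.support, X k} :=
    prod_pow_sub_pow_sum_mem fun k hk =>
      Submodule.mem_colon_singleton.mpr (X_sub_X_mul_prod_mem_pairCubicIdeal hk hi)
  rw [hmonomial, ← hdegree, ← mul_sub, mul_comm]
  exact Submodule.mem_colon_singleton.mp hcolon

theorem monomial_sub_monomial_mem_pairCubicIdeal {s t : σ →₀ ℕ} (hsupp : s.support = t.support)
    (hdeg : s.degree = t.degree) : monomial s 1 - monomial t 1 ∈ pairCubicIdeal σ R := by
  obtain hs | ⟨i, hi⟩ := s.support.eq_empty_or_nonempty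
  · have ht : t.support = ∅ := hsupp ▸ hs
    rw [Finsupp.support_eq_empty.mp hs, Finsupp.support_eq_empty.mp ht, sub_self]
    exact zero_mem _
  · have ht := monomial_sub_prod_mul_pow_mem_pairCubicIdeal (R := R) (hsupp ▸ hi)
    rw [← hsupp, ← hdeg] at ht
    simpa only [sub_sub_sub_cancel_right] using
      sub_mem (monomial_sub_prod_mul_pow_mem_pairCubicIdeal hi) ht

end PairCubic

section PointIdeal

variable {σ R : Type*} [CommRing R]

/-- Restriction of polynomials to the line spanned by `v`: pullback along `t ↦ t • v`. -/
noncomputable def lineRestriction (v : σ → R) : MvPolynomial σ R →ₐ[R] Polynomial R :=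
  aeval fun j => Polynomial.C (v j) * Polynomial.X

/-- The homogeneous ideal of the point `[v]` of projective space, encoded as the ideal of the line
spanned by `v` in affine space. -/
noncomputable def pointIdeal (v : σ → R) : Ideal (MvPolynomial σ R) :=
  RingHom.ker (lineRestriction v)

theorem mem_pointIdeal {v : σ → R} {p : MvPolynomial σ R} :
    p ∈ pointIdeal v ↔ lineRestriction v p = 0 :=
  RingHom.mem_ker

theorem coeff_lineRestriction (v : σ → R) (p : MvPolynomial σ R) (d : ℕ) :
    (lineRestriction v p).coeff d =
      ∑ s ∈ p.support with s.degree = d, p.coeff s * s.prod fun j k => v j ^ k := by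
  have hmonomial (s : σ →₀ ℕ) : lineRestriction v (monomial s (p.coeff s)) =
      Polynomial.monomial s.degree (p.coeff s * s.prod fun j k => v j ^ k) := by
    simp only [lineRestriction, aeval_monomial, mul_pow, Finsupp.prod, Finset.prod_mul_distrib,
      Finset.prod_pow_eq_pow_sum, Finsupp.degree_apply, ← Polynomial.C_mul_X_pow_eq_monomial,
      map_mul, map_prod, map_pow, mul_assoc, Polynomial.algebraMap_eq]
  conv_lhs => rw [p.as_sum]
  simp only [map_sum, hmonomial, Polynomial.finsetSum_coeff, Polynomial.coeff_monomial,
    Finset.sum_filter]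

theorem pointIdeal_le_pointIdeal_zero (v : σ → R) : pointIdeal v ≤ pointIdeal 0 := by
  intro p hp
  have hzero : lineRestriction (0 : σ → R) =
      (Polynomial.aeval (0 : Polynomial R)).comp (lineRestriction v) := by
    ext j
    simp [lineRestriction]
  rw [mem_pointIdeal, hzero, AlgHom.comp_apply, mem_pointIdeal.mp hp, map_zero]

theorem pairCubicIdeal_le_pointIdeal {v : σ → R} (hv : ∀ j, v j = 0 ∨ v j = 1) :
    pairCubicIdeal σ R ≤ pointIdeal v := by
  refine Ideal.span_le.mpr ?_
  rintro _ ⟨⟨i, j⟩, rfl⟩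
  refine mem_pointIdeal.mpr ?_
  obtain hi | hi := hv i <;> obtain hj | hj := hv j <;>
    simp [lineRestriction, pairCubic, hi, hj]

end PointIdeal

section ZeroOnePoints

variable {σ R : Type*} [CommRing R]

/-- The sum of the coefficients of `p` at the monomials of degree `d` in which exactly the variables
of `T` occur. -/
noncomputable def coeffSum [DecidableEq σ] (p : MvPolynomial σ R) (d : ℕ) (T : Finset σ) : R :=
  ∑ s ∈ p.support with s.support = T ∧ s.degree = d, p.coeff s

theorem coeff_lineRestriction_indicator [DecidableEq σ] (S : Finset σ) (p : MvPolynomial σ R)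
    (d : ℕ) :
    (lineRestriction ((S : Set σ).indicator 1) p).coeff d =
      ∑ T ∈ S.powerset, coeffSum p d T := by
  calc (lineRestriction ((S : Set σ).indicator 1) p).coeff d
      = ∑ s ∈ p.support with s.degree = d ∧ s.support ∈ S.powerset, p.coeff s := by
        simp only [coeff_lineRestriction, prod_indicator_one_pow, mul_ite, mul_one, mul_zero,
          ← Finset.sum_filter, Finset.filter_filter, Finset.mem_powerset]
    _ = ∑ T ∈ S.powerset, coeffSum p d T := by
        rw [← Finset.sum_fiberwise_of_maps_to fun s hs => (Finset.mem_filter.mp hs).2.2]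
        refine Finset.sum_congr rfl fun T hT => Finset.sum_congr ?_ fun _ _ => rfl
        rw [Finset.filter_filter]
        refine Finset.filter_congr fun s _ => ⟨fun h => ⟨h.2, h.1.1⟩, ?_⟩
        rintro ⟨rfl, hd⟩
        exact ⟨⟨hd, hT⟩, rfl⟩

theorem mem_pairCubicIdeal_of_coeffSum_eq_zero [DecidableEq σ] {p : MvPolynomial σ R}
    (hp : ∀ d T, coeffSum p d T = 0) : p ∈ pairCubicIdeal σ R := by
  have hsum : ∑ s ∈ p.support, p.coeff s • monomial s (1 : R) ∈
      (pairCubicIdeal σ R).restrictScalars R := by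
    refine sum_smul_mem_of_sum_fiber_eq_zero (f := fun s => (s.support, s.degree)) ?_ ?_
    · intro s t hst
      exact monomial_sub_monomial_mem_pairCubicIdeal (congrArg Prod.fst hst)
        (congrArg Prod.snd hst)
    · rintro ⟨T, d⟩
      simpa only [Prod.mk.injEq, coeffSum] using hp d T
  rw [p.as_sum]
  simpa only [smul_monomial, smul_eq_mul, mul_one, Submodule.restrictScalars_mem] using hsum

theorem iInf_pointIdeal_zero_or_one :
    ⨅ v ∈ {v : σ → R | ∀ j, v j = 0 ∨ v j = 1}, pointIdeal v = pairCubicIdeal σ R := by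
  classical
  refine le_antisymm (fun p hp => ?_) (le_iInf₂ fun v hv => pairCubicIdeal_le_pointIdeal hv)
  simp only [Ideal.mem_iInf] at hp
  refine mem_pairCubicIdeal_of_coeffSum_eq_zero fun d => eq_zero_of_sum_powerset_eq_zero fun S => ?_
  have hS : p ∈ pointIdeal ((S : Set σ).indicator 1) :=
    hp _ fun j => Set.indicator_eq_zero_or_self _ _ j
  rw [← coeff_lineRestriction_indicator, mem_pointIdeal.mp hS, Polynomial.coeff_zero]

theorem ideal_seven_points_three_cubics_general [Nonempty σ] [Nontrivial R] :
    ⨅ v ∈ {v : σ → R | v ≠ 0 ∧ ∀ j, v j = 0 ∨ v j = 1}, pointIdeal v = pairCubicIdeal σ R := by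
  rw [← iInf_pointIdeal_zero_or_one]
  refine le_antisymm (le_iInf₂ fun v hv => ?_) (biInf_mono fun v hv => hv.2)
  obtain rfl | hne := eq_or_ne v 0
  · exact (iInf₂_le 1 ⟨one_ne_zero, fun _ => Or.inr rfl⟩).trans (pointIdeal_le_pointIdeal_zero 1)
  · exact iInf₂_le v ⟨hne, hv⟩

end ZeroOnePoints

theorem range_sevenPoints :
    Set.range sevenPoints = {v | v ≠ 0 ∧ ∀ j, v j = 0 ∨ v j = 1} := by
  refine Set.Subset.antisymm ?_ ?_
  · rintro _ ⟨i, rfl⟩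
    revert i
    decide
  · rintro v ⟨hne, hv⟩
    obtain ⟨b, rfl⟩ : ∃ b : Fin 3 → Bool, v = fun j => if b j then 1 else 0 :=
      ⟨fun j => decide (v j = 1), funext fun j => by obtain h | h := hv j <;> simp [h]⟩
    clear hv
    revert b
    decide

/-- The saturated homogeneous ideal of the seven points
`[1,0,0], [0,1,0], [0,0,1], [1,1,0], [1,0,1], [0,1,1], [1,1,1]` of `ℙ²`, i.e. the
intersection of the (homogeneous) ideals of the individual points — equivalently of
the kernels of the parametrizations `k[x,y,z] → k[t]` of the lines of the affine cone —
is generated by `3` cubic forms. -/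
theorem ideal_seven_points_three_cubics :
    ∃ g : Fin 3 → MvPolynomial (Fin 3) ℚ,
      (∀ j, (g j).IsHomogeneous 3) ∧
      (⨅ i : Fin 7, RingHom.ker ((aeval (fun j => Polynomial.C (sevenPoints i j) *
          Polynomial.X) : MvPolynomial (Fin 3) ℚ →ₐ[ℚ] Polynomial ℚ) :
          MvPolynomial (Fin 3) ℚ →+* Polynomial ℚ)) = Ideal.span (Set.range g) := by
  refine ⟨fun k => pairCubic ℚ (k + 1) (k + 2), fun k => isHomogeneous_pairCubic _ _, ?_⟩
  rw [← pairCubicIdeal_fin_three, ← ideal_seven_points_three_cubics_general, ← range_sevenPoints]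
  exact (iInf_range (f := sevenPoints) (g := pointIdeal)).symm
end

section
/- The ideal generated by the 12 quadratic Cremona forms in equation (1) in ℚ[x_0,...,x_11] defines a projective scheme X ⊂ P^11 (the base locus of ω) of dimension 6 and degree 9, with Hilbert polynomial P(t) = 3·C(t+4,4) − 11·C(t+5,5) + 9·C(t+6,6). -/
open MvPolynomial

noncomputable section

/-- Coordinates `x₀, …, x₁₁` on `ℙ¹¹`. -/
abbrev xP11 : Fin 12 → MvPolynomial (Fin 12) ℚ := X

/-- The 12 quadrics of equation (1), defining the Cremona map `ω : ℙ¹¹ ⇢ ℙ¹¹`. -/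
def omegaP11 : Fin 12 → MvPolynomial (Fin 12) ℚ :=
  ![xP11 6 * xP11 10 - xP11 5 * xP11 11,
    xP11 1 * xP11 10 - xP11 4 * xP11 10 + xP11 3 * xP11 11,
    xP11 6 * xP11 8 - xP11 2 * xP11 11,
    xP11 5 * xP11 8 - xP11 2 * xP11 10,
    xP11 3 * xP11 8 - xP11 0 * xP11 10,
    xP11 1 * xP11 8 - xP11 4 * xP11 8 + xP11 0 * xP11 11,
    xP11 6 * xP11 7 - xP11 1 * xP11 9 + xP11 4 * xP11 9 - xP11 4 * xP11 11,
    xP11 5 * xP11 7 + xP11 3 * xP11 9 - xP11 4 * xP11 10,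
    xP11 2 * xP11 7 - xP11 4 * xP11 8 + xP11 0 * xP11 9,
    xP11 1 * xP11 5 - xP11 4 * xP11 5 + xP11 3 * xP11 6,
    xP11 2 * xP11 3 - xP11 0 * xP11 5,
    xP11 1 * xP11 2 - xP11 2 * xP11 4 + xP11 0 * xP11 6]

/-- The ideal generated by the 12 quadrics. -/
def idealOmegaP11 : Ideal (MvPolynomial (Fin 12) ℚ) := Ideal.span (Set.range omegaP11)

/-- Its saturation with respect to the irrelevant maximal ideal. -/
def idealOmegaP11Sat : Ideal (MvPolynomial (Fin 12) ℚ) :=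
  ⨆ t : ℕ, idealOmegaP11.colon
    ((Ideal.span (Set.range (X : Fin 12 → MvPolynomial (Fin 12) ℚ)) ^ t :
      Ideal (MvPolynomial (Fin 12) ℚ)) : Submodule _ _)

/-!
In suitable linear coordinates a point of `ℙ¹¹` is a pair `(M, v)` of a `3 × 3` matrix and a row
vector. The twelve quadrics are then the `2 × 2` minors of `M` and the entries of `v M`, so the
affine cone over `X` consists of the pairs `(a ⊗ b, v)` with `v ⬝ a = 0`.

Modulo the quadrics, a product of entries of `M` and `v` depends only on its *content*: its row
indices, its column indices and its covector indices. The relation `v M = 0` allows one to restrict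
to the contents in which the index `0` is not both a row index and a covector index. On the
parametrization by `(a ⊗ b, v)` with `a₀ = 1`, these standard products have pairwise distinct
leading monomials. Hence they form a basis of the coordinate ring of the cone, and the ideal is the
kernel of the parametrization: it is prime, hence saturated. The parametrization is birational,
which gives the dimension, and counting standard contents gives the Hilbert function in every
degree.
-/

section KrullDimension

theorem ringKrullDim_eq_of_isIntegral_of_injective {R S : Type*} [CommRing R] [CommRing S]
    [Algebra R S] [Algebra.IsIntegral R S] (hinj : Function.Injective (algebraMap R S)) :
    ringKrullDim S = ringKrullDim R := by
  refine le_antisymm ?_ (iSup_le fun chain => ?_)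
  · exact Order.krullDim_le_of_strictMono (PrimeSpectrum.comap (algebraMap R S))
      fun I J h => Ideal.IsIntegral.comap_lt_comap h
  · obtain ⟨Q, -, hQ, hQ'⟩ := Ideal.exists_ideal_over_prime_of_isIntegral
      chain.head.asIdeal (⊥ : Ideal S) (by
        rw [← RingHom.ker_eq_comap_bot, (RingHom.injective_iff_ker_eq_bot _).mp hinj]
        exact bot_le)
    have : Q.LiesOver chain.head.asIdeal := ⟨hQ'.symm⟩
    obtain ⟨lifted, hlength, -⟩ := Ideal.exists_ltSeries_of_hasGoingUp chain Q
    rw [← hlength]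
    exact Order.LTSeries.length_le_krullDim lifted

theorem ringKrullDim_eq_toNat_trdeg (k R : Type*) [Field k] [CommRing R] [IsDomain R]
    [Algebra k R] [Algebra.FiniteType k R] :
    ringKrullDim R = (Cardinal.toNat (Algebra.trdeg k R) : ℕ) := by
  obtain ⟨s, g, hg, hfin⟩ := exists_integral_inj_algHom_of_fg k R
  algebraize [g.toRingHom]
  have hinj : Function.Injective (algebraMap (MvPolynomial (Fin s) k) R) := hg
  have : FaithfulSMul (MvPolynomial (Fin s) k) R :=
    (faithfulSMul_iff_algebraMap_injective _ _).2 hinj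
  have : IsScalarTower k (MvPolynomial (Fin s) k) R := .of_algHom g
  have htrdeg := lift_trdeg_add_eq k (MvPolynomial (Fin s) k) R
  rw [trdeg_eq_zero (R := MvPolynomial (Fin s) k) (A := R),
    MvPolynomial.trdeg_of_isDomain] at htrdeg
  have hs : s = Cardinal.toNat (Algebra.trdeg k R) := by
    simpa using congrArg Cardinal.toNat htrdeg
  rw [ringKrullDim_eq_of_isIntegral_of_injective hinj,
    MvPolynomial.ringKrullDim_of_isNoetherianRing, ringKrullDim_eq_zero_of_field, zero_add,
    Nat.card_fin, hs]

theorem ringKrullDim_eq_of_isAlgebraic (k R S : Type*) [Field k] [CommRing R] [CommRing S]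
    [IsDomain R] [IsDomain S] [Algebra k R] [Algebra k S] [Algebra R S] [IsScalarTower k R S]
    [FaithfulSMul R S] [Algebra.FiniteType k R] [Algebra.FiniteType k S]
    [Algebra.IsAlgebraic R S] : ringKrullDim S = ringKrullDim R := by
  have htrdeg := lift_trdeg_add_eq k R S
  rw [trdeg_eq_zero (R := R) (A := S)] at htrdeg
  have h : Cardinal.toNat (Algebra.trdeg k R) = Cardinal.toNat (Algebra.trdeg k S) := by
    simpa using congrArg Cardinal.toNat htrdeg
  rw [ringKrullDim_eq_toNat_trdeg k R, ringKrullDim_eq_toNat_trdeg k S, h]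

theorem isAlgebraic_mvPolynomial_of_forall_X {k σ R : Type*} [CommRing k] [CommRing R] [IsDomain R]
    [Algebra k R] [Algebra R (MvPolynomial σ k)] [IsScalarTower k R (MvPolynomial σ k)]
    (h : ∀ i, IsAlgebraic R (X i : MvPolynomial σ k)) :
    Algebra.IsAlgebraic R (MvPolynomial σ k) := by
  refine ⟨fun p => ?_⟩
  induction p using MvPolynomial.induction_on with
  | C a =>
    rw [← MvPolynomial.algebraMap_eq, IsScalarTower.algebraMap_apply k R]
    exact isAlgebraic_algebraMap _
  | add p q hp hq => exact hp.add hq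
  | mul_X p i hp => exact hp.mul (h i)

end KrullDimension

theorem iSup_colon_pow_eq_self_of_isPrime {R : Type*} [CommRing R] {m P : Ideal R} [P.IsPrime]
    (hm : ¬ m ≤ P) : ⨆ t : ℕ, P.colon ((m ^ t : Ideal R) : Submodule R R) = P := by
  obtain ⟨x, hxm, hxP⟩ := SetLike.not_le_iff_exists.1 hm
  refine le_antisymm (iSup_le fun t f hf => ?_) ?_
  · have hfx : f * x ^ t ∈ P := Submodule.mem_colon.1 hf _ (Ideal.pow_mem_pow hxm t)
    exact (‹P.IsPrime›.mem_or_mem hfx).resolve_right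
      fun h => hxP (‹P.IsPrime›.mem_of_pow_mem t h)
  · exact Ideal.le_colon.trans
      (le_iSup (fun t : ℕ => P.colon ((m ^ t : Ideal R) : Submodule R R)) 0)

theorem finrank_map_add_finrank_inf_ker {K V W : Type*} [DivisionRing K] [AddCommGroup V]
    [Module K V] [AddCommGroup W] [Module K W] (f : V →ₗ[K] W) (H : Submodule K V)
    [FiniteDimensional K H] :
    Module.finrank K (H.map f) + Module.finrank K ↥(H ⊓ f.ker) = Module.finrank K H := by
  rw [← (f.domRestrict H).finrank_range_add_finrank_ker, LinearMap.range_domRestrict,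
    LinearMap.ker_domRestrict, ← Submodule.finrank_map_subtype_eq, Submodule.map_comap_subtype]

section Multiset

theorem multiset_prod_map_mem_pow {R A α : Type*} [CommSemiring R] [CommSemiring A] [Algebra R A]
    {W : Submodule R A} {f : α → A} (hf : ∀ a, f a ∈ W) (s : Multiset α) :
    (s.map f).prod ∈ W ^ s.card := by
  induction s using Multiset.induction_on with
  | empty =>
    rw [Multiset.map_zero, Multiset.prod_zero, Multiset.card_zero, pow_zero]
    exact Submodule.one_le.1 le_rfl
  | cons a s ih =>
    rw [Multiset.map_cons, Multiset.prod_cons, Multiset.card_cons, pow_succ']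
    exact Submodule.mul_mem_mul (hf a) ih

theorem multiset_sum_map_eq_sum_count_nsmul {ι M : Type*} [Fintype ι] [DecidableEq ι]
    [AddCommMonoid M] (g : ι → M) (s : Multiset ι) :
    (s.map g).sum = ∑ i, s.count i • g i := by
  rw [Finset.sum_multiset_map_count]
  refine Finset.sum_subset (Finset.subset_univ _) fun i _ hi => ?_
  rw [Multiset.count_eq_zero.2 (by simpa using hi), zero_smul]

theorem multiset_prod_map_ne_zero {ι M : Type*} [CommMonoidWithZero M] [NoZeroDivisors M]
    [Nontrivial M] {f : ι → M} (hf : ∀ i, f i ≠ 0) (s : Multiset ι) : (s.map f).prod ≠ 0 :=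
  Multiset.prod_ne_zero (by simp [hf])

theorem multiset_prod_map_eq_of_map_fst_eq_of_map_snd_eq {α β S : Type*} [CommMonoid S]
    {f : α × β → S} (hf : ∀ a a' b b', f (a, b) * f (a', b') = f (a, b') * f (a', b))
    {s t : Multiset (α × β)} (h₁ : s.map Prod.fst = t.map Prod.fst)
    (h₂ : s.map Prod.snd = t.map Prod.snd) : (s.map f).prod = (t.map f).prod := by
  classical
  induction s using Multiset.induction_on generalizing t with
  | empty =>
    rw [Multiset.map_zero, eq_comm, Multiset.map_eq_zero] at h₁
    rw [h₁]
  | cons x s ih =>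
    obtain ⟨a, b⟩ := x
    have ha : a ∈ t.map Prod.fst := by rw [← h₁]; simp
    obtain ⟨⟨a₁, b'⟩, hmem, rfl⟩ := Multiset.mem_map.1 ha
    obtain ⟨t', rfl⟩ := Multiset.exists_cons_of_mem hmem
    simp only [Multiset.map_cons, Multiset.cons_inj_right, Multiset.prod_cons] at h₁ h₂ ⊢
    by_cases hb : b = b'
    · subst hb
      rw [ih h₁ ((Multiset.cons_inj_right _).1 h₂)]
    · have hbm : b ∈ t'.map Prod.snd :=
        (Multiset.mem_cons.1 (h₂ ▸ Multiset.mem_cons_self b _)).resolve_left hb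
      obtain ⟨⟨a', b₁⟩, hmem', rfl⟩ := Multiset.mem_map.1 hbm
      obtain ⟨t'', rfl⟩ := Multiset.exists_cons_of_mem hmem'
      have hswap : (s.map f).prod = (((a', b') ::ₘ t'').map f).prod := by
        refine ih (by simpa using h₁) ?_
        rw [Multiset.map_cons, Multiset.cons_swap, Multiset.cons_inj_right] at h₂
        simpa using h₂
      rw [hswap, Multiset.map_cons, Multiset.map_cons, Multiset.prod_cons, Multiset.prod_cons,
        ← mul_assoc, ← mul_assoc, hf]

theorem exists_multiset_map_fst_eq_map_snd_eq {α β : Type*} {A : Multiset α} {B : Multiset β}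
    (h : A.card = B.card) :
    ∃ s : Multiset (α × β), s.map Prod.fst = A ∧ s.map Prod.snd = B := by
  induction A, B using Quotient.inductionOn₂ with
  | h A B =>
    exact ⟨(A.zip B : List (α × β)), congrArg _ (List.map_fst_zip (by simpa using h.le)),
      congrArg _ (List.map_snd_zip (by simpa using h.ge))⟩

end Multiset

section MonomialOrder

variable {σ ι R : Type*} [CommRing R] [NoZeroDivisors R] (m : MonomialOrder σ)

theorem linearIndependent_of_injective_degree {f : ι → MvPolynomial σ R} (hf : ∀ i, f i ≠ 0)
    (hinj : Function.Injective fun i => m.degree (f i)) : LinearIndependent R f := by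
  classical
  rw [linearIndependent_iff']
  by_contra! hdep
  obtain ⟨s, g, hsum, i, hi, hgi⟩ := hdep
  obtain ⟨j, hj, hmax⟩ := (s.filter (g · ≠ 0)).exists_max_image
    (fun i => m.toSyn (m.degree (f i))) ⟨i, by simp [hi, hgi]⟩
  rw [Finset.mem_filter] at hj
  have hcoeff := congrArg (coeff (m.degree (f j))) hsum
  rw [coeff_sum, Finset.sum_eq_single_of_mem j hj.1, coeff_smul, coeff_zero, smul_eq_mul] at hcoeff
  · exact mul_ne_zero hj.2 (m.coeff_degree_ne_zero_iff.2 (hf j)) hcoeff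
  · intro b hb hbj
    rw [coeff_smul, smul_eq_mul]
    by_cases hgb : g b = 0
    · rw [hgb, zero_mul]
    · rw [m.coeff_eq_zero_of_lt, mul_zero]
      exact lt_of_le_of_ne (hmax b (by simp [hb, hgb]))
        fun h => hbj (hinj (m.toSyn.injective h))

theorem degree_multiset_prod_map [Nontrivial R] {f : ι → MvPolynomial σ R} (hf : ∀ i, f i ≠ 0)
    (s : Multiset ι) :
    m.degree (s.map f).prod = (s.map fun i => m.degree (f i)).sum := by
  induction s using Multiset.induction_on with
  | empty => simp
  | cons a s ih =>
    rw [Multiset.map_cons, Multiset.prod_cons, Multiset.map_cons, Multiset.sum_cons, ← ih,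
      m.degree_mul (hf a) (multiset_prod_map_ne_zero hf s)]

end MonomialOrder

section Binomial

open Finset

theorem sum_antidiagonal_choose_mul_choose {R : Type*} [CommRing R] (a b t : ℕ) :
    ∑ p ∈ antidiagonal t, ((p.1 + a).choose a : R) * (p.2 + b).choose b =
      (t + (a + b + 1)).choose (a + b + 1) := by
  have h := congrArg (PowerSeries.coeff t)
    (pow_add (PowerSeries.mk 1 : PowerSeries R) (a + 1) (b + 1))
  rw [show a + 1 + (b + 1) = a + b + 1 + 1 by ring, PowerSeries.mk_one_pow_eq_mk_choose_add,
    PowerSeries.mk_one_pow_eq_mk_choose_add, PowerSeries.mk_one_pow_eq_mk_choose_add,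
    PowerSeries.coeff_mul] at h
  simpa only [PowerSeries.coeff_mk, Nat.add_comm _ t, Nat.add_comm a (Prod.fst _),
    Nat.add_comm b (Prod.snd _)] using h.symm

theorem choose_three_eq (n : ℕ) : ((n + 3).choose 3 : ℚ) = (n + 3) * (n + 2).choose 2 / 3 := by
  rw [eq_div_iff three_ne_zero]
  exact_mod_cast (Nat.add_one_mul_choose_eq (n + 2) 2).symm

theorem choose_four_eq (n : ℕ) : ((n + 4).choose 4 : ℚ) = (n + 4) * (n + 3).choose 3 / 4 := by
  rw [eq_div_iff four_ne_zero]
  exact_mod_cast (Nat.add_one_mul_choose_eq (n + 3) 3).symm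

-- The products are expanded in the basis `(n + k).choose k`, in which convolution is computed by
-- `sum_antidiagonal_choose_mul_choose`.
theorem choose_two_mul_self (n : ℕ) : ((n + 2).choose 2 : ℤ) * (n + 2).choose 2 =
    6 * (n + 4).choose 4 - 6 * (n + 3).choose 3 + (n + 2).choose 2 := by
  qify
  rw [choose_four_eq, choose_three_eq, Nat.cast_choose_two]
  push_cast
  ring

theorem choose_two_mul_choose_two (n : ℕ) : ((n + 2).choose 2 : ℤ) * (n + 1).choose 2 =
    6 * (n + 4).choose 4 - 9 * (n + 3).choose 3 + 3 * (n + 2).choose 2 := by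
  qify
  rw [choose_four_eq, choose_three_eq, Nat.cast_choose_two, Nat.cast_choose_two]
  push_cast
  ring

theorem sum_choose_two_mul_self_mul_choose_two (t : ℕ) :
    ∑ p ∈ antidiagonal t,
        ((p.1 + 2).choose 2 : ℤ) * (p.1 + 2).choose 2 * (p.2 + 2).choose 2 =
      6 * (t + 7).choose 7 - 6 * (t + 6).choose 6 + (t + 5).choose 5 := by
  simp only [choose_two_mul_self, add_mul, sub_mul, sum_add_distrib, sum_sub_distrib, mul_assoc,
    ← mul_sum, sum_antidiagonal_choose_mul_choose]

theorem sum_choose_two_mul_choose_two_mul_choose_two (t : ℕ) :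
    ∑ p ∈ antidiagonal (t + 1),
        ((p.1 + 2).choose 2 : ℤ) * (p.1 + 1).choose 2 * (p.2 + 1).choose 2 =
      6 * (t + 7).choose 7 - 9 * (t + 6).choose 6 + 3 * (t + 5).choose 5 := by
  rw [Finset.Nat.sum_antidiagonal_succ', Nat.choose_eq_zero_of_lt (n := 0 + 1) one_lt_two,
    Nat.cast_zero, mul_zero, zero_add]
  simp only [choose_two_mul_choose_two, add_mul, sub_mul, sum_add_distrib, sum_sub_distrib,
    mul_assoc, ← mul_sum, Nat.add_assoc, Nat.reduceAdd, sum_antidiagonal_choose_mul_choose]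

theorem sum_choose_two_mul_sub_eq (t : ℕ) :
    ∑ p ∈ antidiagonal t, ((p.1 + 2).choose 2 : ℤ) *
        ((p.1 + 2).choose 2 * (p.2 + 2).choose 2 - (p.1 + 1).choose 2 * (p.2 + 1).choose 2) =
      3 * (t + 4).choose 4 - 11 * (t + 5).choose 5 + 9 * (t + 6).choose 6 := by
  simp only [mul_sub, ← mul_assoc, sum_sub_distrib, sum_choose_two_mul_self_mul_choose_two]
  cases t with
  | zero => simp
  | succ t =>
    rw [sum_choose_two_mul_choose_two_mul_choose_two]
    have h₇ := Nat.choose_succ_succ' (t + 7) 6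
    have h₆ := Nat.choose_succ_succ' (t + 6) 5
    have h₅ := Nat.choose_succ_succ' (t + 5) 4
    simp only [Nat.reduceAdd, add_assoc] at h₇ h₆ h₅ ⊢
    omega

end Binomial

section SegrePair

variable {ι κ S : Type*} [CommSemiring S]

/-- A matrix `M` and a row vector `v` with entries in a commutative semiring such that the `2 × 2`
minors of `M` vanish and `v M = 0`. -/
structure IsSegrePair [Fintype ι] (M : Matrix ι κ S) (v : ι → S) : Prop where
  minor_eq (i i' : ι) (j j' : κ) : M i j * M i' j' = M i j' * M i' j
  vecMul_eq_zero : Matrix.vecMul v M = 0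

/-- The product of the entries of `M` at the positions in `s` and the entries of `v` at the
positions in `C`. -/
def segreProd (M : Matrix ι κ S) (v : ι → S) (s : Multiset (ι × κ)) (C : Multiset ι) : S :=
  (s.map fun p => M p.1 p.2).prod * (C.map v).prod

theorem segreProd_cons_cons (M : Matrix ι κ S) (v : ι → S) (p : ι × κ) (i : ι)
    (s : Multiset (ι × κ)) (C : Multiset ι) :
    segreProd M v (p ::ₘ s) (i ::ₘ C) = v i * M p.1 p.2 * segreProd M v s C := by
  simp only [segreProd, Multiset.map_cons, Multiset.prod_cons]
  ring

theorem map_segreProd {T : Type*} [CommSemiring T] (f : S →+* T) (M : Matrix ι κ S) (v : ι → S)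
    (s : Multiset (ι × κ)) (C : Multiset ι) :
    f (segreProd M v s C) = segreProd (M.map f) (f ∘ v) s C := by
  simp only [segreProd, map_mul, map_multiset_prod, Multiset.map_map, Function.comp_def,
    Matrix.map_apply]

theorem segreProd_vecMulVec (a : ι → S) (b : κ → S) (v : ι → S) (s : Multiset (ι × κ))
    (C : Multiset ι) :
    segreProd (Matrix.vecMulVec a b) v s C =
      ((s.map Prod.fst).map a).prod * ((s.map Prod.snd).map b).prod * (C.map v).prod := by
  simp only [segreProd, Matrix.vecMulVec_apply, Multiset.prod_map_mul, Multiset.map_map,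
    Function.comp_def]

theorem IsSegrePair.segreProd_congr [Fintype ι] {M : Matrix ι κ S} {v : ι → S}
    (h : IsSegrePair M v) {s s' : Multiset (ι × κ)} (h₁ : s.map Prod.fst = s'.map Prod.fst)
    (h₂ : s.map Prod.snd = s'.map Prod.snd) (C : Multiset ι) :
    segreProd M v s C = segreProd M v s' C := by
  rw [segreProd, segreProd, multiset_prod_map_eq_of_map_fst_eq_of_map_snd_eq h.minor_eq h₁ h₂]

theorem IsSegrePair.sum_segreProd_cons_eq_zero [Fintype ι] {M : Matrix ι κ S} {v : ι → S}
    (h : IsSegrePair M v) (j : κ) (s : Multiset (ι × κ)) (C : Multiset ι) :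
    ∑ i, segreProd M v ((i, j) ::ₘ s) (i ::ₘ C) = 0 := by
  simp only [segreProd_cons_cons, ← Finset.sum_mul]
  exact mul_eq_zero_of_left (congrFun h.vecMul_eq_zero j) _

theorem segreProd_mem_span_pow (k : Type*) [CommSemiring k] [Algebra k S] (M : Matrix ι κ S)
    (v : ι → S) (s : Multiset (ι × κ)) (C : Multiset ι) :
    segreProd M v s C ∈
      Submodule.span k (Set.range (Function.uncurry M) ∪ Set.range v) ^ (s.card + C.card) := by
  rw [segreProd, pow_add]
  exact Submodule.mul_mem_mul
    (multiset_prod_map_mem_pow (fun p => Submodule.subset_span (.inl ⟨p, rfl⟩)) s)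
    (multiset_prod_map_mem_pow (fun i => Submodule.subset_span (.inr ⟨i, rfl⟩)) C)

open scoped Pointwise in
theorem exists_segreProd_eq_of_mem_pow {M : Matrix ι κ S} {v : ι → S} {t : ℕ} {f : S}
    (hf : f ∈ (Set.range (Function.uncurry M) ∪ Set.range v) ^ t) :
    ∃ s C, s.card + C.card = t ∧ segreProd M v s C = f := by
  induction t generalizing f with
  | zero => exact ⟨0, 0, rfl, by simpa [segreProd, eq_comm] using hf⟩
  | succ t ih =>
    rw [pow_succ'] at hf
    obtain ⟨g, hg, f, hf, rfl⟩ := hf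
    obtain ⟨s, C, rfl, rfl⟩ := ih hf
    obtain ⟨p, rfl⟩ | ⟨i, rfl⟩ := hg
    · refine ⟨p ::ₘ s, C, by rw [Multiset.card_cons, add_right_comm], ?_⟩
      simp [segreProd, mul_assoc, Function.uncurry]
    · refine ⟨s, i ::ₘ C, by rw [Multiset.card_cons, add_assoc], ?_⟩
      simp [segreProd, mul_left_comm]

/-- The content of a product of entries of a matrix and a covector: the row and the column
indices of the matrix entries and the indices of the covector entries. It is standard with
respect to `i₀` when `i₀` does not occur both as a row index and as a covector index. -/
@[ext]
structure StandardContent (i₀ : ι) (κ : Type*) where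
  rows : Multiset ι
  cols : Multiset κ
  covector : Multiset ι
  card_rows : rows.card = cols.card
  standard : i₀ ∉ rows ∨ i₀ ∉ covector

namespace StandardContent

variable {i₀ : ι}

/-- The number of factors of a product with content `x`. -/
def degree (x : StandardContent i₀ κ) : ℕ := x.cols.card + x.covector.card

/-- A choice of matrix positions with the prescribed row and column indices; by
`IsSegrePair.segreProd_congr` the choice does not matter for Segre pairs. -/
def pairing (x : StandardContent i₀ κ) : Multiset (ι × κ) :=
  (exists_multiset_map_fst_eq_map_snd_eq x.card_rows).choose

theorem map_fst_pairing (x : StandardContent i₀ κ) : x.pairing.map Prod.fst = x.rows :=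
  (exists_multiset_map_fst_eq_map_snd_eq x.card_rows).choose_spec.1

theorem map_snd_pairing (x : StandardContent i₀ κ) : x.pairing.map Prod.snd = x.cols :=
  (exists_multiset_map_fst_eq_map_snd_eq x.card_rows).choose_spec.2

theorem card_pairing (x : StandardContent i₀ κ) : x.pairing.card = x.cols.card := by
  rw [← x.map_snd_pairing, Multiset.card_map]

end StandardContent

/-- The product of entries of `M` and `v` with a given standard content. -/
def standardProd {i₀ : ι} (M : Matrix ι κ S) (v : ι → S) (x : StandardContent i₀ κ) : S :=
  segreProd M v x.pairing x.covector

theorem map_standardProd {T : Type*} [CommSemiring T] {i₀ : ι} (f : S →+* T) (M : Matrix ι κ S)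
    (v : ι → S) (x : StandardContent i₀ κ) :
    f (standardProd M v x) = standardProd (M.map f) (f ∘ v) x :=
  map_segreProd f M v _ _

theorem standardProd_vecMulVec {i₀ : ι} (a : ι → S) (b : κ → S) (v : ι → S)
    (x : StandardContent i₀ κ) :
    standardProd (Matrix.vecMulVec a b) v x =
      (x.rows.map a).prod * (x.cols.map b).prod * (x.covector.map v).prod := by
  rw [standardProd, segreProd_vecMulVec, x.map_fst_pairing, x.map_snd_pairing]

end SegrePair

section Straightening

variable {ι κ S : Type*} [CommRing S] [Fintype ι] {M : Matrix ι κ S} {v : ι → S}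
  (k : Type*) [CommRing k] [Algebra k S]

-- The relation `v M = 0` trades a pair `M i₀ j * v i₀` for pairs `M i j * v i` with `i ≠ i₀`, so
-- induction on the number of factors `v i₀` terminates.
theorem IsSegrePair.segreProd_mem_span_standardProd (h : IsSegrePair M v) (i₀ : ι)
    (s : Multiset (ι × κ)) (C : Multiset ι) :
    segreProd M v s C ∈ Submodule.span k
      (standardProd M v '' {x : StandardContent i₀ κ | x.degree = s.card + C.card}) := by
  classical
  induction hn : C.count i₀ using Nat.strong_induction_on generalizing s C with
  | _ n ih =>
  by_cases hstd : i₀ ∉ s.map Prod.fst ∨ i₀ ∉ C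
  · let x : StandardContent i₀ κ := ⟨s.map Prod.fst, s.map Prod.snd, C, by simp, hstd⟩
    exact Submodule.subset_span ⟨x, congrArg (· + C.card) (Multiset.card_map _ _),
      h.segreProd_congr x.map_fst_pairing x.map_snd_pairing C⟩
  · rw [not_or, not_not, not_not] at hstd
    obtain ⟨⟨_, j⟩, hmem, rfl⟩ := Multiset.mem_map.1 hstd.1
    obtain ⟨s, rfl⟩ := Multiset.exists_cons_of_mem hmem
    obtain ⟨C, rfl⟩ := Multiset.exists_cons_of_mem hstd.2
    have hrel := h.sum_segreProd_cons_eq_zero j s C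
    rw [← Finset.add_sum_erase _ _ (Finset.mem_univ _)] at hrel
    rw [eq_neg_of_add_eq_zero_left hrel]
    refine neg_mem (sum_mem fun i hi => ?_)
    rw [Multiset.count_cons_self] at hn
    have hcount := Multiset.count_cons_of_ne (Finset.ne_of_mem_erase hi).symm C
    simpa only [Multiset.card_cons] using
      ih (C.count _) (hn ▸ Nat.lt_succ_self _) ((i, j) ::ₘ s) (i ::ₘ C) hcount

theorem IsSegrePair.span_pow_eq_span_standardProd (h : IsSegrePair M v) (i₀ : ι) (t : ℕ) :
    Submodule.span k (Set.range (Function.uncurry M) ∪ Set.range v) ^ t =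
      Submodule.span k (standardProd M v '' {x : StandardContent i₀ κ | x.degree = t}) := by
  refine le_antisymm ?_ (Submodule.span_le.2 ?_)
  · rw [Submodule.span_pow, Submodule.span_le]
    intro f hf
    obtain ⟨s, C, rfl, rfl⟩ := exists_segreProd_eq_of_mem_pow hf
    exact h.segreProd_mem_span_standardProd k i₀ s C
  · rintro _ ⟨x, rfl, rfl⟩
    rw [StandardContent.degree, ← x.card_pairing]
    exact segreProd_mem_span_pow k M v x.pairing x.covector

end Straightening

section Counting

open Finset

/-- Standard contents of degree `t`, sorted by their numbers of matrix and of covector entries. -/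
def StandardContent.fiberEquiv {ι : Type*} (i₀ : ι) (κ : Type*) (t : ℕ) :
    {x : StandardContent i₀ κ // x.degree = t} ≃
      Σ p : antidiagonal t, Sym κ p.1.1 ×
        {q : Sym ι p.1.1 × Sym ι p.1.2 // i₀ ∉ q.1 ∨ i₀ ∉ q.2} where
  toFun x := ⟨⟨(x.1.cols.card, x.1.covector.card), mem_antidiagonal.2 x.2⟩,
    ⟨x.1.cols, rfl⟩, ⟨(⟨x.1.rows, x.1.card_rows⟩, ⟨x.1.covector, rfl⟩), x.1.standard⟩⟩
  invFun y := ⟨⟨y.2.2.1.1, y.2.1, y.2.2.1.2, y.2.2.1.1.2.trans y.2.1.2.symm, y.2.2.2⟩,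
    (congrArg₂ _ y.2.1.2 y.2.2.1.2.2).trans (mem_antidiagonal.1 y.1.2)⟩
  left_inv _ := rfl
  right_inv := by
    rintro ⟨⟨⟨n, m⟩, hnm⟩, ⟨B, hB⟩, ⟨⟨A, hA⟩, ⟨C, hC⟩⟩, hstd⟩
    obtain rfl : B.card = n := hB
    obtain rfl : C.card = m := hC
    rfl

theorem card_sym_fin (m n : ℕ) :
    Fintype.card (Sym (Fin (m + 1)) n) = (n + m).choose m := by
  rw [Sym.card_sym_eq_choose, Fintype.card_fin, ← Nat.choose_symm_add]
  congr 1
  omega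

theorem card_zero_mem_sym_fin (m n : ℕ) :
    Fintype.card {s : Sym (Fin (m + 2)) n // 0 ∈ s} = (n + m).choose (m + 1) := by
  cases n with
  | zero =>
    rw [Nat.choose_eq_zero_of_lt (by omega), Fintype.card_eq_zero_iff, isEmpty_subtype]
    exact fun s => Sym.eq_nil_of_card_zero s ▸ Sym.notMem_nil 0
  | succ n => rw [Nat.add_right_comm, Nat.add_assoc, ← card_sym_fin, Fintype.card_congr Sym.e1]

theorem card_subtype_not_or_not_add {α β : Type*} [Fintype α] [Fintype β] (p : α → Prop)
    (q : β → Prop) [DecidablePred p] [DecidablePred q] :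
    Fintype.card {x : α × β // ¬ p x.1 ∨ ¬ q x.2} +
      Fintype.card {a // p a} * Fintype.card {b // q b} = Fintype.card α * Fintype.card β := by
  rw [← Fintype.card_prod, ← Fintype.card_prod, ← Fintype.card_congr Equiv.subtypeProdEquivProd,
    Fintype.card_congr (Equiv.subtypeEquivRight fun x : α × β =>
      (not_and_or (a := p x.1) (b := q x.2)).symm),
    Fintype.card_subtype_compl, Nat.sub_add_cancel (Fintype.card_subtype_le _)]

theorem natCard_standardContent_fin (l m t : ℕ) :
    (Nat.card {x : StandardContent (0 : Fin (m + 2)) (Fin (l + 1)) // x.degree = t} : ℤ) =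
      ∑ p ∈ antidiagonal t, ((p.1 + l).choose l : ℤ) *
        ((p.1 + (m + 1)).choose (m + 1) * (p.2 + (m + 1)).choose (m + 1) -
          (p.1 + m).choose (m + 1) * (p.2 + m).choose (m + 1)) := by
  rw [Nat.card_congr (StandardContent.fiberEquiv _ _ t), Nat.card_eq_fintype_card,
    Fintype.card_sigma, Nat.cast_sum, ← sum_coe_sort (antidiagonal t)]
  refine sum_congr rfl fun p _ => ?_
  rw [Fintype.card_prod, card_sym_fin, Nat.cast_mul]
  congr 1
  rw [eq_sub_iff_add_eq, ← card_sym_fin, ← card_sym_fin, ← card_zero_mem_sym_fin,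
    ← card_zero_mem_sym_fin]
  exact_mod_cast card_subtype_not_or_not_add (fun s : Sym (Fin (m + 2)) p.1.1 => 0 ∈ s)
    (fun s : Sym (Fin (m + 2)) p.1.2 => 0 ∈ s)

theorem natCard_standardContent_fin_three (t : ℕ) :
    (Nat.card {x : StandardContent (0 : Fin 3) (Fin 3) // x.degree = t} : ℤ) =
      3 * (t + 4).choose 4 - 11 * (t + 5).choose 5 + 9 * (t + 6).choose 6 :=
  (natCard_standardContent_fin 2 1 t).trans (sum_choose_two_mul_sub_eq t)

end Counting

section BaseLocus

/-- The matrix of linear forms whose `2 × 2` minors are nine of the forms `omegaP11`. -/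
def segreMatrix : Matrix (Fin 3) (Fin 3) (MvPolynomial (Fin 12) ℚ) :=
  !![X 8, X 10, X 11; X 2, X 5, X 6; X 0, X 3, X 4 - X 1]

/-- The row vector of linear forms whose product with `segreMatrix` consists of the other three
of the forms `omegaP11`. -/
def segreCovector : Fin 3 → MvPolynomial (Fin 12) ℚ := ![-X 4, X 7, X 9]

theorem adjugate_segreMatrix : segreMatrix.adjugate =
    !![-omegaP11 9, omegaP11 1, omegaP11 0;
      omegaP11 11, -omegaP11 5, -omegaP11 2;
      omegaP11 10, -omegaP11 4, omegaP11 3] := by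
  rw [segreMatrix, Matrix.adjugate_fin_three_of]
  simp only [omegaP11, Matrix.cons_val]
  ring_nf

theorem segreCovector_vecMul_segreMatrix :
    Matrix.vecMul segreCovector segreMatrix = ![omegaP11 8, omegaP11 7, omegaP11 6] := by
  funext j
  rw [Matrix.vecMul, dotProduct, Fin.sum_univ_three]
  fin_cases j <;>
    simp only [segreCovector, segreMatrix, omegaP11, Matrix.of_apply, Matrix.cons_val',
      Matrix.cons_val, Fin.zero_eta, Fin.mk_one, Fin.reduceFinMk] <;>
    ring

theorem minor_eq_of_adjugate_eq_zero {R : Type*} [CommRing R] {M : Matrix (Fin 3) (Fin 3) R}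
    (hM : M.adjugate = 0) (i i' j j' : Fin 3) : M i j * M i' j' = M i j' * M i' j := by
  have hminor (r c : Fin 3) : M (r.succAbove 0) (c.succAbove 0) * M (r.succAbove 1) (c.succAbove 1)
      - M (r.succAbove 0) (c.succAbove 1) * M (r.succAbove 1) (c.succAbove 0) = 0 := by
    have h := congrFun₂ hM c r
    rwa [Matrix.adjugate_fin_succ_eq_det_submatrix, Matrix.zero_apply, neg_one_pow_mul_eq_zero_iff,
      Matrix.det_fin_two] at h
  have hcompl : ∀ a b : Fin 3, a ≠ b → ∃ r : Fin 3,
      (r.succAbove 0 = a ∧ r.succAbove 1 = b) ∨ (r.succAbove 0 = b ∧ r.succAbove 1 = a) := by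
    decide
  rcases eq_or_ne i i' with rfl | hi
  · exact mul_comm _ _
  rcases eq_or_ne j j' with rfl | hj
  · rfl
  obtain ⟨r, ⟨rfl, rfl⟩ | ⟨rfl, rfl⟩⟩ := hcompl i i' hi <;>
    obtain ⟨c, ⟨rfl, rfl⟩ | ⟨rfl, rfl⟩⟩ := hcompl j j' hj
  · linear_combination hminor r c
  · linear_combination -hminor r c
  · linear_combination -hminor r c
  · linear_combination hminor r c

theorem mk_omegaP11 (i : Fin 12) : Ideal.Quotient.mk idealOmegaP11 (omegaP11 i) = 0 :=
  Ideal.Quotient.eq_zero_iff_mem.2 (Ideal.subset_span ⟨i, rfl⟩)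

theorem isSegrePair_segreMatrix_segreCovector :
    IsSegrePair (segreMatrix.map (Ideal.Quotient.mk idealOmegaP11))
      (Ideal.Quotient.mk idealOmegaP11 ∘ segreCovector) where
  minor_eq := by
    refine minor_eq_of_adjugate_eq_zero ?_
    rw [← RingHom.mapMatrix_apply, ← RingHom.map_adjugate, adjugate_segreMatrix]
    ext i j
    fin_cases i <;> fin_cases j <;> simp [mk_omegaP11]
  vecMul_eq_zero := by
    funext j
    rw [← RingHom.map_vecMul, segreCovector_vecMul_segreMatrix]
    fin_cases j <;> simp [mk_omegaP11]

theorem span_segreMatrix_segreCovector :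
    Submodule.span ℚ (Set.range (Function.uncurry segreMatrix) ∪ Set.range segreCovector) =
      homogeneousSubmodule (Fin 12) ℚ 1 := by
  rw [homogeneousSubmodule_one_eq_span_X]
  refine le_antisymm (Submodule.span_le.2 ?_) (Submodule.span_le.2 ?_)
  · have hX : ∀ i : Fin 12, (X i : MvPolynomial (Fin 12) ℚ) ∈
        Submodule.span ℚ (Set.range (X : Fin 12 → MvPolynomial (Fin 12) ℚ)) :=
      fun i => Submodule.subset_span ⟨i, rfl⟩
    rintro _ (⟨⟨i, j⟩, rfl⟩ | ⟨i, rfl⟩)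
    · fin_cases i <;> fin_cases j <;> first | exact hX _ | exact sub_mem (hX 4) (hX 1)
    · fin_cases i <;> first | exact hX _ | exact neg_mem (hX 4)
  · set W := Submodule.span ℚ
      (Set.range (Function.uncurry segreMatrix) ∪ Set.range segreCovector)
    have hM (i j : Fin 3) : segreMatrix i j ∈ W := Submodule.subset_span (.inl ⟨(i, j), rfl⟩)
    have hv (i : Fin 3) : segreCovector i ∈ W := Submodule.subset_span (.inr ⟨i, rfl⟩)
    have h₄ : X 4 ∈ W := neg_mem_iff.1 (hv 0)
    have h₁ : X 1 ∈ W := sub_sub_cancel (X 4 : MvPolynomial (Fin 12) ℚ) (X 1) ▸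
      sub_mem h₄ (hM 2 2)
    rintro _ ⟨i, rfl⟩
    fin_cases i
    exacts [hM 2 0, h₁, hM 1 0, hM 2 1, h₄, hM 1 1, hM 1 2, hv 1, hM 0 0, hv 2, hM 0 1, hM 0 2]

/-- The row vector `a` of the parametrization `(a ⊗ b, v)` of the base locus, in the chart
`a 0 = 1`. -/
def rowParam : Fin 3 → MvPolynomial (Fin 7) ℚ := ![1, X 0, X 1]

/-- The column vector `b` of the parametrization `(a ⊗ b, v)` of the base locus. -/
def colParam : Fin 3 → MvPolynomial (Fin 7) ℚ := ![X 2, X 3, X 4]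

/-- The general covector `v` with `v ⬝ᵥ rowParam = 0`. -/
def covectorParam : Fin 3 → MvPolynomial (Fin 7) ℚ := ![-(X 0 * X 5 + X 1 * X 6), X 5, X 6]

/-- The comorphism of the rational parametrization `(rowParam ⊗ colParam, covectorParam)` of the
affine cone over the base locus, on the coordinates of `ℙ¹¹`. -/
def coneParam : MvPolynomial (Fin 12) ℚ →ₐ[ℚ] MvPolynomial (Fin 7) ℚ :=
  aeval ![X 1 * X 2, X 0 * X 5 + X 1 * X 6 - X 1 * X 4, X 0 * X 2, X 1 * X 3,
    X 0 * X 5 + X 1 * X 6, X 0 * X 3, X 0 * X 4, X 5, X 2, X 6, X 3, X 4]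

theorem map_segreMatrix_coneParam :
    segreMatrix.map coneParam = Matrix.vecMulVec rowParam colParam := by
  ext1 i j
  fin_cases i <;> fin_cases j <;>
    simp [segreMatrix, coneParam, rowParam, colParam, Matrix.vecMulVec_apply]

theorem coneParam_comp_segreCovector : coneParam ∘ segreCovector = covectorParam := by
  funext i
  fin_cases i <;> simp [segreCovector, coneParam, covectorParam]

theorem coneParam_omegaP11 (i : Fin 12) : coneParam (omegaP11 i) = 0 := by
  fin_cases i <;>
    simp only [coneParam, omegaP11, map_sub, map_add, map_mul, aeval_X, Matrix.cons_val,
      Fin.zero_eta, Fin.mk_one, Fin.reduceFinMk] <;>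
    ring

theorem idealOmegaP11_le_ker_coneParam : idealOmegaP11 ≤ RingHom.ker coneParam := by
  rw [idealOmegaP11, Ideal.span_le]
  rintro _ ⟨i, rfl⟩
  exact coneParam_omegaP11 i

theorem rowParam_ne_zero (i : Fin 3) : rowParam i ≠ 0 := by
  fin_cases i <;> simp [rowParam]

theorem colParam_ne_zero (i : Fin 3) : colParam i ≠ 0 := by
  fin_cases i <;> simp [colParam]

theorem degree_rowParam (i : Fin 3) : MonomialOrder.lex.degree (rowParam i) =
    ![0, Finsupp.single 0 1, Finsupp.single 1 1] i := by
  fin_cases i <;> simp [rowParam, MonomialOrder.degree_X]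

theorem degree_colParam (i : Fin 3) : MonomialOrder.lex.degree (colParam i) =
    ![Finsupp.single 2 1, Finsupp.single 3 1, Finsupp.single 4 1] i := by
  fin_cases i <;> simp [colParam, MonomialOrder.degree_X]

theorem degree_covectorParam (i : Fin 3) : MonomialOrder.lex.degree (covectorParam i) =
    ![Finsupp.single 0 1 + Finsupp.single 5 1, Finsupp.single 5 1, Finsupp.single 6 1] i := by
  have hmul (a b : Fin 7) : MonomialOrder.lex.degree (X a * X b : MvPolynomial (Fin 7) ℚ) =
      Finsupp.single a 1 + Finsupp.single b 1 := by
    rw [MonomialOrder.degree_mul (X_ne_zero a) (X_ne_zero b), MonomialOrder.degree_X,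
      MonomialOrder.degree_X]
  fin_cases i
  · rw [Fin.zero_eta, covectorParam, Matrix.cons_val_zero, MonomialOrder.degree_neg,
      MonomialOrder.degree_add_of_lt, hmul, Matrix.cons_val_zero]
    rw [hmul, hmul, MonomialOrder.lex_lt_iff, Finsupp.Lex.lt_iff]
    exact ⟨0, fun j hj => absurd hj (by simp), by simp⟩
  · simp [covectorParam, MonomialOrder.degree_X]
  · simp [covectorParam, MonomialOrder.degree_X]

theorem covectorParam_ne_zero (i : Fin 3) : covectorParam i ≠ 0 := by
  refine MonomialOrder.ne_zero_of_degree_ne_zero (m := MonomialOrder.lex) ?_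
  rw [degree_covectorParam]
  fin_cases i <;> simp

theorem standardProd_param_ne_zero (x : StandardContent (0 : Fin 3) (Fin 3)) :
    standardProd (Matrix.vecMulVec rowParam colParam) covectorParam x ≠ 0 := by
  rw [standardProd_vecMulVec]
  exact mul_ne_zero (mul_ne_zero (multiset_prod_map_ne_zero rowParam_ne_zero _)
    (multiset_prod_map_ne_zero colParam_ne_zero _))
    (multiset_prod_map_ne_zero covectorParam_ne_zero _)

theorem degree_standardProd_param (x : StandardContent (0 : Fin 3) (Fin 3)) :
    ⇑(MonomialOrder.lex.degree
        (standardProd (Matrix.vecMulVec rowParam colParam) covectorParam x)) =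
      ![x.rows.count 1 + x.covector.count 0, x.rows.count 2, x.cols.count 0, x.cols.count 1,
        x.cols.count 2, x.covector.count 0 + x.covector.count 1, x.covector.count 2] := by
  have hne := standardProd_param_ne_zero x
  rw [standardProd_vecMulVec] at hne ⊢
  rw [MonomialOrder.degree_mul' hne, MonomialOrder.degree_mul' (left_ne_zero_of_mul hne),
    degree_multiset_prod_map _ rowParam_ne_zero, degree_multiset_prod_map _ colParam_ne_zero,
    degree_multiset_prod_map _ covectorParam_ne_zero]
  simp only [multiset_sum_map_eq_sum_count_nsmul, degree_rowParam, degree_colParam,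
    degree_covectorParam, Fin.sum_univ_three]
  funext i
  fin_cases i <;> simp

theorem injective_degree_standardProd_param :
    Function.Injective fun x : StandardContent (0 : Fin 3) (Fin 3) => MonomialOrder.lex.degree
      (standardProd (Matrix.vecMulVec rowParam colParam) covectorParam x) := by
  intro x y h
  have hcard (s : Multiset (Fin 3)) : s.card = s.count 0 + s.count 1 + s.count 2 := by
    rw [← Multiset.sum_count_eq_card (s := Finset.univ) (by simp), Fin.sum_univ_three]
  have hx := x.card_rows
  have hy := y.card_rows
  have hx₀ := x.standard
  have hy₀ := y.standard
  simp only [hcard, ← Multiset.count_eq_zero] at hx hy hx₀ hy₀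
  have hdeg := congrArg DFunLike.coe h
  simp only [degree_standardProd_param, Matrix.vecCons_inj, and_true] at hdeg
  ext i <;> fin_cases i <;> simp only [Fin.zero_eta, Fin.mk_one, Fin.reduceFinMk] <;> omega

theorem linearIndependent_standardProd_param : LinearIndependent ℚ
    (standardProd (i₀ := (0 : Fin 3)) (Matrix.vecMulVec rowParam colParam) covectorParam) :=
  linearIndependent_of_injective_degree MonomialOrder.lex standardProd_param_ne_zero
    injective_degree_standardProd_param

/-- The map induced by `coneParam` on the coordinate ring of the affine cone. -/
def quotientConeParam :
    MvPolynomial (Fin 12) ℚ ⧸ idealOmegaP11 →ₐ[ℚ] MvPolynomial (Fin 7) ℚ :=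
  Ideal.Quotient.liftₐ idealOmegaP11 coneParam fun _ hf => idealOmegaP11_le_ker_coneParam hf

/-- The family of standard products in the coordinate ring of the affine cone; it is a basis. -/
def standardProdMk (x : StandardContent (0 : Fin 3) (Fin 3)) :
    MvPolynomial (Fin 12) ℚ ⧸ idealOmegaP11 :=
  standardProd (segreMatrix.map (Ideal.Quotient.mk idealOmegaP11))
    (Ideal.Quotient.mk idealOmegaP11 ∘ segreCovector) x

theorem quotientConeParam_standardProdMk (x : StandardContent (0 : Fin 3) (Fin 3)) :
    quotientConeParam (standardProdMk x) =
      standardProd (Matrix.vecMulVec rowParam colParam) covectorParam x := by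
  rw [← map_segreMatrix_coneParam, ← coneParam_comp_segreCovector]
  exact map_standardProd quotientConeParam.toRingHom _ _ x

theorem linearIndependent_quotientConeParam_standardProdMk :
    LinearIndependent ℚ (quotientConeParam.toLinearMap ∘ standardProdMk) := by
  rw [show quotientConeParam.toLinearMap ∘ standardProdMk = _ from
    funext quotientConeParam_standardProdMk]
  exact linearIndependent_standardProd_param

theorem map_mk_homogeneousSubmodule (t : ℕ) :
    (homogeneousSubmodule (Fin 12) ℚ t).map (Ideal.Quotient.mkₐ ℚ idealOmegaP11).toLinearMap =
      Submodule.span ℚ (standardProdMk '' {x | x.degree = t}) := by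
  refine Eq.trans ?_
    (isSegrePair_segreMatrix_segreCovector.span_pow_eq_span_standardProd ℚ 0 t)
  rw [← homogeneousSubmodule_one_pow, Submodule.map_pow, ← span_segreMatrix_segreCovector,
    Submodule.map_span, Set.image_union, ← Set.range_comp, ← Set.range_comp]
  rfl

theorem span_range_standardProdMk : Submodule.span ℚ (Set.range standardProdMk) = ⊤ := by
  refine eq_top_iff.2 fun g _ => ?_
  obtain ⟨f, rfl⟩ := Ideal.Quotient.mk_surjective g
  rw [← sum_homogeneousComponent f, map_sum]
  refine sum_mem fun t _ => Submodule.span_mono (Set.image_subset_range _ {x | x.degree = t}) ?_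
  rw [← map_mk_homogeneousSubmodule t]
  exact Submodule.mem_map_of_mem (homogeneousComponent_isHomogeneous t f)

theorem injective_quotientConeParam : Function.Injective quotientConeParam := by
  have hdisj := Submodule.range_ker_disjoint linearIndependent_quotientConeParam_standardProdMk
  rw [span_range_standardProdMk, top_disjoint] at hdisj
  exact LinearMap.ker_eq_bot.1 hdisj

theorem ker_coneParam : RingHom.ker coneParam = idealOmegaP11 := by
  refine le_antisymm (fun f hf => ?_) idealOmegaP11_le_ker_coneParam
  rw [← Ideal.Quotient.eq_zero_iff_mem, ← injective_quotientConeParam.eq_iff, map_zero]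
  exact hf

theorem idealOmegaP11Sat_eq : idealOmegaP11Sat = idealOmegaP11 := by
  have : idealOmegaP11.IsPrime := ker_coneParam ▸ RingHom.ker_isPrime coneParam
  refine iSup_colon_pow_eq_self_of_isPrime fun hle => ?_
  have hX : coneParam (X 8) = 0 :=
    RingHom.mem_ker.1 (ker_coneParam ▸ hle (Ideal.subset_span ⟨8, rfl⟩))
  rw [coneParam, aeval_X] at hX
  exact X_ne_zero 2 hX

instance : Algebra.FiniteType ℚ coneParam.range :=
  .of_surjective coneParam.rangeRestrict coneParam.rangeRestrict_surjective

instance : Algebra.IsAlgebraic coneParam.range (MvPolynomial (Fin 7) ℚ) := by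
  have hmem {p : MvPolynomial (Fin 7) ℚ} (i : Fin 12) (h : coneParam (X i) = p) :
      IsAlgebraic coneParam.range p :=
    isAlgebraic_algebraMap (⟨p, X i, h⟩ : coneParam.range)
  have h₂ : IsAlgebraic coneParam.range (X 2 : MvPolynomial (Fin 7) ℚ) :=
    hmem 8 (by simp [coneParam])
  have hdiv {p : MvPolynomial (Fin 7) ℚ} (i : Fin 12) (h : coneParam (X i) = X 2 * p) :
      IsAlgebraic coneParam.range p :=
    .of_mul (mem_nonZeroDivisors_of_ne_zero (X_ne_zero 2)) h₂ (hmem i h)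
  refine isAlgebraic_mvPolynomial_of_forall_X (k := ℚ) fun i => ?_
  fin_cases i
  · exact hdiv 2 (by simp [coneParam, mul_comm])
  · exact hdiv 0 (by simp [coneParam, mul_comm])
  · exact h₂
  · exact hmem 10 (by simp [coneParam])
  · exact hmem 11 (by simp [coneParam])
  · exact hmem 7 (by simp [coneParam])
  · exact hmem 9 (by simp [coneParam])

theorem ringKrullDim_quotient_idealOmegaP11 :
    ringKrullDim (MvPolynomial (Fin 12) ℚ ⧸ idealOmegaP11) = (7 : ℕ) := by
  rw [← ker_coneParam,
    ringKrullDim_eq_of_ringEquiv (Ideal.quotientKerEquivRange coneParam).toRingEquiv,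
    ← ringKrullDim_eq_of_isAlgebraic ℚ coneParam.range (MvPolynomial (Fin 7) ℚ),
    MvPolynomial.ringKrullDim_of_isNoetherianRing, ringKrullDim_eq_zero_of_field, zero_add,
    Nat.card_fin]

theorem finrank_map_mk_homogeneousSubmodule (t : ℕ) :
    Module.finrank ℚ ((homogeneousSubmodule (Fin 12) ℚ t).map
      (Ideal.Quotient.mkₐ ℚ idealOmegaP11).toLinearMap) =
      Nat.card {x : StandardContent (0 : Fin 3) (Fin 3) // x.degree = t} := by
  rw [map_mk_homogeneousSubmodule, Set.image_eq_range]
  exact Module.finrank_eq_nat_card_basis (Module.Basis.span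
    (linearIndependent_quotientConeParam_standardProdMk.of_comp.comp _ Subtype.val_injective))

theorem finrank_homogeneousSubmodule_eq_add (t : ℕ) :
    Module.finrank ℚ (homogeneousSubmodule (Fin 12) ℚ t) =
      Nat.card {x : StandardContent (0 : Fin 3) (Fin 3) // x.degree = t} +
        Module.finrank ℚ ↥(homogeneousSubmodule (Fin 12) ℚ t ⊓
          idealOmegaP11.restrictScalars ℚ) := by
  have : FiniteDimensional ℚ (homogeneousSubmodule (Fin 12) ℚ t) :=
    Module.Finite.iff_fg.2 (homogeneousSubmodule_fg _ _ t)
  have hker : (Ideal.Quotient.mkₐ ℚ idealOmegaP11).toLinearMap.ker =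
      idealOmegaP11.restrictScalars ℚ := by
    ext f
    exact Ideal.Quotient.eq_zero_iff_mem
  rw [← finrank_map_mk_homogeneousSubmodule, ← hker, finrank_map_add_finrank_inf_ker]

end BaseLocus

/-- The base locus `X ⊂ ℙ¹¹` of the Cremona transformation `ω` has dimension `6`
(its affine cone has Krull dimension `7`) and degree `9`, with Hilbert polynomial
`P(t) = 3·C(t+4,4) − 11·C(t+5,5) + 9·C(t+6,6)`. -/
theorem base_locus_cremonaP11 :
    ringKrullDim (MvPolynomial (Fin 12) ℚ ⧸ idealOmegaP11Sat) = (7 : ℕ) ∧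
    ∃ N : ℕ, ∀ t ≥ N,
      ((Module.finrank ℚ ↥(homogeneousSubmodule (Fin 12) ℚ t) : ℤ) -
        (Module.finrank ℚ ↥(homogeneousSubmodule (Fin 12) ℚ t ⊓
          Submodule.restrictScalars ℚ idealOmegaP11Sat) : ℤ)) =
      3 * ((t + 4).choose 4 : ℤ) - 11 * ((t + 5).choose 5 : ℤ) +
        9 * ((t + 6).choose 6 : ℤ) := by
  rw [idealOmegaP11Sat_eq]
  refine ⟨ringKrullDim_quotient_idealOmegaP11, 0, fun t _ => ?_⟩
  rw [finrank_homogeneousSubmodule_eq_add, Nat.cast_add, add_sub_cancel_right,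
    natCard_standardContent_fin_three]

end
end

section
/- The 8 quadratic forms in t_0,...,t_7: −t_1t_4+t_0t_5, −t_2t_4+t_0t_6, −t_3t_4+t_0t_7, −t_2t_5+t_1t_6, −t_3t_5+t_1t_7, −t_3t_6+t_2t_7, t_0²+t_2²+t_3²+t_1t_5+t_1t_6+t_0t_7, t_0t_4+t_5²+t_2t_6+t_5t_6+t_3t_7+t_4t_7 define a projective scheme E ⊂ P^7 of dimension 3 and degree 7. -/
open MvPolynomial

noncomputable section

/-- Coordinates `t₀, …, t₇` on `ℙ⁷`. -/
abbrev tP7 : Fin 8 → MvPolynomial (Fin 8) ℚ := X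

/-- The 8 quadrics cutting out the degenerate 3-dimensional Edge variety `E ⊂ ℙ⁷`. -/
def edgeQuadrics : Fin 8 → MvPolynomial (Fin 8) ℚ :=
  ![-(tP7 1 * tP7 4) + tP7 0 * tP7 5,
    -(tP7 2 * tP7 4) + tP7 0 * tP7 6,
    -(tP7 3 * tP7 4) + tP7 0 * tP7 7,
    -(tP7 2 * tP7 5) + tP7 1 * tP7 6,
    -(tP7 3 * tP7 5) + tP7 1 * tP7 7,
    -(tP7 3 * tP7 6) + tP7 2 * tP7 7,
    tP7 0 ^ 2 + tP7 2 ^ 2 + tP7 3 ^ 2 + tP7 1 * tP7 5 + tP7 1 * tP7 6 + tP7 0 * tP7 7,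
    tP7 0 * tP7 4 + tP7 5 ^ 2 + tP7 2 * tP7 6 + tP7 5 * tP7 6 + tP7 3 * tP7 7 +
      tP7 4 * tP7 7]

/-- The ideal generated by the 8 quadrics. -/
def idealEdge : Ideal (MvPolynomial (Fin 8) ℚ) := Ideal.span (Set.range edgeQuadrics)

/-- Its saturation with respect to the irrelevant maximal ideal. -/
def idealEdgeSat : Ideal (MvPolynomial (Fin 8) ℚ) :=
  ⨆ t : ℕ, idealEdge.colon
    ((Ideal.span (Set.range (X : Fin 8 → MvPolynomial (Fin 8) ℚ)) ^ t :
      Ideal (MvPolynomial (Fin 8) ℚ)) : Submodule _ _)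

/-!
The Segre comorphism `φ : ℚ[t] → ℚ[s; x]` of `ℙ¹ × ℙ³ ⊂ ℙ⁷` has as kernel the ideal of `2 × 2`
minors, i.e. of the first six quadrics, and it maps the last two quadrics to `s₀ F` and `s₁ F`,
where `F = s₀ A + s₁ B` has bidegree `(1, 2)`. Give `s₀, s₁` degree `1` and the `x_c` degree `-1`.
A multiple `F g` of `F` in the image of `φ` has degree `0`, so `g` has degree `1`, i.e.
`g ∈ s₀ im φ + s₁ im φ`. Hence the ideal of the eight quadrics is `φ⁻¹(F)`; as `F` is prime to
`φ(t₇) = s₁ x₃`, it is saturated.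

With `R = ℚ[s; x]`, the Hilbert function is therefore `dim R_(t,t) - dim R_(t-1,t-2)`, which is
`(t + 1) C(t + 3, 3) - t C(t + 1, 3)`. The affine cone has dimension at most `8 - 4`: the ideal has
height at least `4`, as one sees from a chain of primes which makes the columns of the matrix
`(t₀ … t₃; t₄ … t₇)` proportional one after the other, and finally adds `F`. It has dimension at
least `4`, as the parametrization `x ↦ ((-B(x) : A(x)), x)` can be restricted to a flag of
coordinate subspaces.
-/

section CommutativeAlgebra

lemma height_add_ringKrullDim_quotient_le {A : Type*} [CommRing A] (I : Ideal A) :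
    (I.height : WithBot ℕ∞) + ringKrullDim (A ⧸ I) ≤ ringKrullDim A := by
  rw [ringKrullDim_quotient, ringKrullDim]
  cases isEmpty_or_nonempty (PrimeSpectrum.zeroLocus (I : Set A)) with
  | inl h => simp [Order.krullDim_eq_bot]
  | inr h =>
    have : Nonempty (PrimeSpectrum A) := h.map Subtype.val
    rw [Order.krullDim_eq_iSup_coheight_of_nonempty,
      Order.krullDim_eq_iSup_height_add_coheight_of_nonempty, ← WithBot.coe_add, ENat.add_iSup,
      WithBot.coe_le_coe]
    refine iSup_le fun p => le_iSup_of_le p.1 (add_le_add ?_ ?_)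
    · exact (Ideal.height_mono p.2).trans_eq p.1.height_eq_orderHeight
    · exact Order.coheight_le_coheight_apply_of_strictMono Subtype.val (fun _ _ h => h) p

lemma natCast_le_ringKrullDim_quotient {A : Type*} [CommRing A] {I : Ideal A} {n : ℕ}
    {p : Fin (n + 1) → Ideal A} (hp : ∀ i, (p i).IsPrime) (hp_mono : StrictMono p)
    (hI : I ≤ p 0) : (n : WithBot ℕ∞) ≤ ringKrullDim (A ⧸ I) := by
  rw [ringKrullDim_quotient]
  let chain : LTSeries (PrimeSpectrum.zeroLocus (I : Set A)) :=
    LTSeries.mk n (fun i => ⟨⟨p i, hp i⟩, hI.trans (hp_mono.monotone i.zero_le)⟩)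
      fun _ _ h => hp_mono h
  exact Order.LTSeries.length_le_krullDim chain

lemma ker_lt_ker_comp {k A B C : Type*} [CommSemiring k] [Semiring A] [Semiring B]
    [Semiring C] [Algebra k A] [Algebra k B] [Algebra k C] {f : A →ₐ[k] B} {g : B →ₐ[k] C} {a : A}
    (h : g (f a) = 0) (h' : f a ≠ 0) : RingHom.ker f < RingHom.ker (g.comp f) := by
  refine SetLike.lt_iff_le_and_exists.2 ⟨fun x hx => ?_, a, h, h'⟩
  rw [RingHom.mem_ker, AlgHom.comp_apply, RingHom.mem_ker.1 hx, map_zero]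

lemma le_iSup_colon_pow {A : Type*} [CommRing A] (I 𝔪 : Ideal A) :
    I ≤ ⨆ t : ℕ, I.colon ((𝔪 ^ t : Ideal A) : Submodule A A) := fun _ hf =>
  Submodule.mem_iSup_of_mem 0 (Submodule.mem_colon.2 fun s _ => I.mul_mem_right s hf)

lemma iSup_colon_pow_le {A : Type*} [CommRing A] {I J 𝔪 : Ideal A} (hIJ : I ≤ J) {a : A}
    (ha : a ∈ 𝔪) (haJ : ∀ f, f * a ∈ J → f ∈ J) :
    ⨆ t : ℕ, I.colon ((𝔪 ^ t : Ideal A) : Submodule A A) ≤ J := by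
  have of_mul_pow_mem (f : A) (t : ℕ) : f * a ^ t ∈ J → f ∈ J := by
    induction t with
    | zero => simp
    | succ t ih => exact fun h => ih (haJ _ (by rwa [mul_assoc, ← pow_succ]))
  exact iSup_le fun t f hf =>
    of_mul_pow_mem f t (hIJ (Submodule.mem_colon.1 hf _ (Ideal.pow_mem_pow ha t)))

end CommutativeAlgebra

section CoordinateFlag

variable {k : Type*} [CommRing k] {n : ℕ}

/-- Restriction of polynomials to the linear subspace `x_0 = ⋯ = x_{j-1} = 0`. -/
def flagRestrict (k : Type*) [CommRing k] {n : ℕ} (j : Fin (n + 1)) :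
    MvPolynomial (Fin n) k →ₐ[k] MvPolynomial (Fin n) k :=
  aeval fun i => if i.castSucc < j then 0 else X i

lemma flagRestrict_X (i : Fin n) (j : Fin (n + 1)) :
    flagRestrict k j (X i) = if i.castSucc < j then 0 else X i :=
  aeval_X _ _

lemma flagRestrict_zero : flagRestrict k (0 : Fin (n + 1)) = AlgHom.id k _ :=
  algHom_ext fun i => by simp [flagRestrict_X]

lemma flagRestrict_comp_of_le {i j : Fin (n + 1)} (h : i ≤ j) :
    (flagRestrict k j).comp (flagRestrict k i) = flagRestrict k j := by
  refine algHom_ext fun l => ?_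
  rw [AlgHom.comp_apply, flagRestrict_X l i]
  split_ifs with hl
  · simp [flagRestrict_X, hl.trans_le h]
  · rfl

lemma natCast_le_ringKrullDim_quotient_of_flagRestrict [IsDomain k] {A : Type*} [CommRing A]
    [Algebra k A] {I : Ideal A} {f : A →ₐ[k] MvPolynomial (Fin n) k} (hI : I ≤ RingHom.ker f)
    (h : ∀ i : Fin n, ∃ a, flagRestrict k i.succ (f a) = 0 ∧ flagRestrict k i.castSucc (f a) ≠ 0) :
    (n : WithBot ℕ∞) ≤ ringKrullDim (A ⧸ I) := by
  refine natCast_le_ringKrullDim_quotient (p := fun j => RingHom.ker ((flagRestrict k j).comp f))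
    (fun j => RingHom.ker_isPrime _) (Fin.strictMono_iff_lt_succ.2 fun i => ?_) ?_
  · obtain ⟨a, ha, ha'⟩ := h i
    have hcomp : (flagRestrict k i.succ).comp ((flagRestrict k i.castSucc).comp f) =
        (flagRestrict k i.succ).comp f := by
      rw [← AlgHom.comp_assoc, flagRestrict_comp_of_le i.castSucc_le_succ]
    rw [← hcomp]
    refine ker_lt_ker_comp (a := a) ?_ ha'
    rw [← AlgHom.comp_apply, hcomp, AlgHom.comp_apply, ha]
  · rwa [flagRestrict_zero, AlgHom.id_comp]

end CoordinateFlag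

section LinearAlgebra

variable {k V W : Type*} [Field k] [AddCommGroup V] [Module k V] [AddCommGroup W] [Module k W]

lemma finrank_map_add_finrank_inf_ker_s14 (f : V →ₗ[k] W) (p : Submodule k V) [FiniteDimensional k p] :
    Module.finrank k (p.map f) + Module.finrank k ↥(p ⊓ LinearMap.ker f) = Module.finrank k p := by
  rw [← LinearMap.finrank_range_add_finrank_ker (f.domRestrict p), LinearMap.range_domRestrict,
    LinearMap.ker_domRestrict, ← Submodule.map_comap_subtype, Submodule.finrank_map_subtype_eq]

lemma finrank_add_finrank_map_inf (f : V →ₗ[k] W) (p : Submodule k V) [FiniteDimensional k p]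
    (q : Submodule k W) :
    Module.finrank k p + Module.finrank k ↥(p.map f ⊓ q) =
      Module.finrank k (p.map f) + Module.finrank k ↥(p ⊓ q.comap f) := by
  have : FiniteDimensional k ↥(p ⊓ q.comap f) := Submodule.finiteDimensional_of_le inf_le_left
  have hker : p ⊓ q.comap f ⊓ LinearMap.ker f = p ⊓ LinearMap.ker f := by
    rw [inf_assoc, inf_eq_right.2 (f.ker_le_comap (p := q))]
  rw [← finrank_map_add_finrank_inf_ker_s14 f p, ← finrank_map_add_finrank_inf_ker_s14 f (p ⊓ q.comap f),
    hker, ← Submodule.map_inf_eq_map_inf_comap, add_right_comm, add_assoc]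

end LinearAlgebra

section WeightedHomogeneous

variable {R σ M : Type*} [CommSemiring R] [AddCommMonoid M] (w : σ → M)

lemma weightedHomogeneousSubmodule_eq_span (m : M) :
    weightedHomogeneousSubmodule R w m =
      Submodule.span R ((fun d => monomial d (1 : R)) '' {d | Finsupp.weight w d = m}) := by
  rw [weightedHomogeneousSubmodule_eq_finsupp_supported, AddMonoidAlgebra.supported_eq_span_single]
  rfl

lemma homogeneousSubmodule_eq_span (t : ℕ) :
    homogeneousSubmodule σ R t =
      Submodule.span R ((fun d => monomial d (1 : R)) '' {d | d.degree = t}) := by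
  rw [homogeneousSubmodule_eq_finsupp_supported, AddMonoidAlgebra.supported_eq_span_single]
  rfl

lemma finrank_weightedHomogeneousSubmodule [StrongRankCondition R] (m : M) :
    Module.finrank R (weightedHomogeneousSubmodule R w m) =
      Nat.card {d : σ →₀ ℕ // Finsupp.weight w d = m} := by
  rw [weightedHomogeneousSubmodule_eq_finsupp_supported]
  exact Module.finrank_eq_nat_card_basis
    (basisRestrictSupport R {d : σ →₀ ℕ | Finsupp.weight w d = m})

end WeightedHomogeneous

lemma weightedHomogeneousSubmodule_inf_span_singleton {R σ M : Type*} [CommSemiring R]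
    [AddCancelCommMonoid M] {w : σ → M} {m : M} {F : MvPolynomial σ R}
    (hF : IsWeightedHomogeneous w F m) (n : M) :
    weightedHomogeneousSubmodule R w (m + n) ⊓ (Ideal.span {F}).restrictScalars R =
      (weightedHomogeneousSubmodule R w n).map (LinearMap.mulLeft R F) := by
  classical
  let := weightedGradedAlgebra R w
  apply le_antisymm
  · rintro _ ⟨hf, hFf⟩
    obtain ⟨g, rfl⟩ := Ideal.mem_span_singleton.1 hFf
    refine ⟨DirectSum.decompose (weightedHomogeneousSubmodule R w) g n, Subtype.coe_prop _, ?_⟩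
    rw [LinearMap.mulLeft_apply, ← DirectSum.coe_decompose_mul_add_of_left_mem _ hF,
      DirectSum.decompose_of_mem_same _ hf]
  · rintro _ ⟨g, hg, rfl⟩
    exact ⟨hF.mul hg, Ideal.mul_mem_right g _ (Ideal.mem_span_singleton_self F)⟩

section ProductsOfEntries

variable {ρ κ A : Type*} [CommMonoid A] {x : ρ × κ → A}

lemma exists_prod_map_eq_mul_of_minors
    (hx : ∀ r r' c c', x (r, c) * x (r', c') = x (r, c') * x (r', c)) {N : Multiset (ρ × κ)}
    {r : ρ} {c : κ} (hr : r ∈ N.map Prod.fst) (hc : c ∈ N.map Prod.snd) :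
    ∃ N' : Multiset (ρ × κ), N.map Prod.fst = r ::ₘ N'.map Prod.fst ∧
      N.map Prod.snd = c ::ₘ N'.map Prod.snd ∧ (N.map x).prod = x (r, c) * (N'.map x).prod := by
  obtain ⟨⟨r, c'⟩, hrc', rfl⟩ := Multiset.mem_map.1 hr
  obtain ⟨N, rfl⟩ := Multiset.exists_cons_of_mem hrc'
  obtain rfl | hc := Multiset.mem_cons.1 (Multiset.map_cons Prod.snd _ N ▸ hc)
  · exact ⟨N, by simp⟩
  obtain ⟨⟨r', c⟩, hrc, rfl⟩ := Multiset.mem_map.1 hc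
  obtain ⟨N, rfl⟩ := Multiset.exists_cons_of_mem hrc
  refine ⟨(r', c') ::ₘ N, by simp, by simp [Multiset.cons_swap c'], ?_⟩
  simp only [Multiset.map_cons, Multiset.prod_cons, ← mul_assoc, hx r r' c' c]

lemma prod_map_eq_prod_map_of_minors
    (hx : ∀ r r' c c', x (r, c) * x (r', c') = x (r, c') * x (r', c)) {N N' : Multiset (ρ × κ)}
    (hfst : N.map Prod.fst = N'.map Prod.fst) (hsnd : N.map Prod.snd = N'.map Prod.snd) :
    (N.map x).prod = (N'.map x).prod := by
  induction N using Multiset.induction generalizing N' with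
  | empty =>
    obtain rfl : N' = 0 := by simpa using hfst.symm
    rfl
  | cons p N ih =>
    rw [Multiset.map_cons] at hfst hsnd
    obtain ⟨N'', hfst', hsnd', hprod⟩ := exists_prod_map_eq_mul_of_minors hx
      (hfst ▸ Multiset.mem_cons_self p.1 _) (hsnd ▸ Multiset.mem_cons_self p.2 _)
    rw [Multiset.map_cons, Multiset.prod_cons, hprod,
      ih ((Multiset.cons_inj_right _).1 (hfst.trans hfst'))
        ((Multiset.cons_inj_right _).1 (hsnd.trans hsnd'))]

end ProductsOfEntries

section Segre

variable {k ι ρ κ : Type*} [CommRing k] (e : ι ≃ ρ × κ)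

/-- The comorphism `t_i ↦ s_r x_c`, `e i = (r, c)`, of the Segre embedding, where `e` arranges the
coordinates `t_i` of the target in a matrix and `s_r`, `x_c` are the variables indexed by the two
summands of `ρ ⊕ κ`. -/
def segre : MvPolynomial ι k →ₐ[k] MvPolynomial (ρ ⊕ κ) k :=
  aeval fun i => X (Sum.inl (e i).1) * X (Sum.inr (e i).2)

@[simp]
lemma segre_X (i : ι) :
    segre e (X i : MvPolynomial ι k) = X (Sum.inl (e i).1) * X (Sum.inr (e i).2) :=
  aeval_X _ _

/-- The effect of the Segre comorphism on exponent vectors. -/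
def segreExp : (ι →₀ ℕ) →+ (ρ ⊕ κ →₀ ℕ) :=
  Finsupp.mapDomain.addMonoidHom (fun i => Sum.inl (e i).1) +
    Finsupp.mapDomain.addMonoidHom fun i => Sum.inr (e i).2

lemma segreExp_single (i : ι) (n : ℕ) :
    segreExp e (Finsupp.single i n) =
      Finsupp.single (Sum.inl (e i).1) n + Finsupp.single (Sum.inr (e i).2) n := by
  simp [segreExp]

lemma segreExp_comapDomain_inl (d : ι →₀ ℕ) :
    (segreExp e d).comapDomain Sum.inl Sum.inl_injective.injOn =
      d.mapDomain (Prod.fst ∘ e) := by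
  classical
  induction d using Finsupp.induction_linear with
  | zero => simp
  | add f g hf hg => rw [map_add, Finsupp.comapDomain_add_of_injective Sum.inl_injective, hf, hg,
      Finsupp.mapDomain_add]
  | single i n => ext r; simp [segreExp_single, Finsupp.single_apply]

lemma segreExp_comapDomain_inr (d : ι →₀ ℕ) :
    (segreExp e d).comapDomain Sum.inr Sum.inr_injective.injOn =
      d.mapDomain (Prod.snd ∘ e) := by
  classical
  induction d using Finsupp.induction_linear with
  | zero => simp
  | add f g hf hg => rw [map_add, Finsupp.comapDomain_add_of_injective Sum.inr_injective, hf, hg,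
      Finsupp.mapDomain_add]
  | single i n => ext r; simp [segreExp_single, Finsupp.single_apply]

lemma segre_monomial (d : ι →₀ ℕ) (a : k) :
    segre e (monomial d a) = monomial (segreExp e d) a := by
  induction d using Finsupp.induction_linear generalizing a with
  | zero => simp [← C_apply, ← algebraMap_eq]
  | add f g hf hg =>
    rw [← mul_one a, ← monomial_mul, map_mul, hf, hg, monomial_mul, map_add]
  | single i n =>
    rw [← C_mul_X_pow_eq_monomial, map_mul, map_pow, segre_X, ← algebraMap_eq, AlgHom.commutes,
      algebraMap_eq, segreExp_single, mul_pow, X_pow_eq_monomial, X_pow_eq_monomial, monomial_mul,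
      C_mul_monomial, one_mul, mul_one]

/-- The `2 × 2` minor with rows `r`, `r'` and columns `c`, `c'` of the matrix of coordinates. -/
def segreMinor (k : Type*) [CommRing k] {ι ρ κ : Type*} (e : ι ≃ ρ × κ) (r r' : ρ) (c c' : κ) :
    MvPolynomial ι k :=
  X (e.symm (r, c)) * X (e.symm (r', c')) - X (e.symm (r, c')) * X (e.symm (r', c))

lemma segre_segreMinor (r r' : ρ) (c c' : κ) : segre e (segreMinor k e r r' c c') = 0 := by
  simp only [segreMinor, map_sub, map_mul, segre_X, Equiv.apply_symm_apply]
  ring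

lemma segreMinor_mem_of_forall_lt [LinearOrder ρ] [LinearOrder κ] {J : Ideal (MvPolynomial ι k)}
    (hJ : ∀ r r' c c', r < r' → c < c' → segreMinor k e r r' c c' ∈ J) (r r' : ρ) (c c' : κ) :
    segreMinor k e r r' c c' ∈ J := by
  wlog hr : r ≤ r' generalizing r r' c c'
  · convert this r' r c' c (le_of_not_ge hr) using 1
    simp only [segreMinor]
    ring
  wlog hc : c ≤ c' generalizing c c'
  · convert J.neg_mem (this c' c (le_of_not_ge hc)) using 1
    simp only [segreMinor]
    ring
  obtain rfl | hr := hr.eq_or_lt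
  · simp [segreMinor, mul_comm]
  obtain rfl | hc := hc.eq_or_lt
  · simp [segreMinor]
  exact hJ r r' c c' hr hc

lemma mk_monomial_eq_mk_monomial {J : Ideal (MvPolynomial ι k)}
    (hJ : ∀ r r' c c', segreMinor k e r r' c c' ∈ J) {d d' : ι →₀ ℕ}
    (h : segreExp e d = segreExp e d') :
    Ideal.Quotient.mk J (monomial d 1) = Ideal.Quotient.mk J (monomial d' 1) := by
  let x : ρ × κ → MvPolynomial ι k ⧸ J := fun p => Ideal.Quotient.mk J (X (e.symm p))
  have mk_monomial (d : ι →₀ ℕ) :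
      Ideal.Quotient.mk J (monomial d 1) = ((d.toMultiset.map e).map x).prod := by
    have h : monomial d (1 : k) = (d.toMultiset.map X).prod := by
      rw [Finsupp.toMultiset_map, Finsupp.prod_toMultiset,
        Finsupp.prod_mapDomain_index (by simp) (by simp [pow_add]), monomial_eq, C_1, one_mul]
    rw [h, map_multiset_prod, Multiset.map_map, Multiset.map_map]
    congr 2
    ext i
    simp [x]
  rw [mk_monomial, mk_monomial]
  refine prod_map_eq_prod_map_of_minors (fun r r' c c' => ?_) ?_ ?_
  · simpa only [x, ← map_mul] using Ideal.Quotient.eq.2 (hJ r r' c c')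
  · rw [Multiset.map_map, Multiset.map_map, Finsupp.toMultiset_map, Finsupp.toMultiset_map,
      ← segreExp_comapDomain_inl, h, segreExp_comapDomain_inl]
  · rw [Multiset.map_map, Multiset.map_map, Finsupp.toMultiset_map, Finsupp.toMultiset_map,
      ← segreExp_comapDomain_inr, h, segreExp_comapDomain_inr]

theorem ker_segre_eq_span [LinearOrder ρ] [LinearOrder κ] :
    RingHom.ker (segre (k := k) e) =
      Ideal.span {f | ∃ r r' c c', r < r' ∧ c < c' ∧ segreMinor k e r r' c c' = f} := by
  set J := Ideal.span {f | ∃ r r' c c', r < r' ∧ c < c' ∧ segreMinor k e r r' c c' = f}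
  have hJ := segreMinor_mem_of_forall_lt e (J := J) fun r r' c c' hr hc =>
    Ideal.subset_span ⟨r, r', c, c', hr, hc, rfl⟩
  let L : MvPolynomial (ρ ⊕ κ) k →ₗ[k] MvPolynomial ι k ⧸ J :=
    (basisMonomials (ρ ⊕ κ) k).constr k fun y =>
      Ideal.Quotient.mk J (monomial (Function.invFun (segreExp e) y) 1)
  have hL : L ∘ₗ (segre e).toLinearMap = (Ideal.Quotient.mkₐ k J).toLinearMap := by
    refine (basisMonomials ι k).ext fun d => ?_
    have := (basisMonomials (ρ ⊕ κ) k).constr_basis k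
      (fun y => Ideal.Quotient.mk J (monomial (Function.invFun (segreExp e) y) 1)) (segreExp e d)
    rw [coe_basisMonomials] at this
    rw [coe_basisMonomials, LinearMap.comp_apply, AlgHom.toLinearMap_apply, segre_monomial, this]
    exact mk_monomial_eq_mk_monomial e hJ (Function.invFun_eq ⟨d, rfl⟩)
  refine le_antisymm (fun f hf => ?_) (Ideal.span_le.2 ?_)
  · have h : L (segre e f) = Ideal.Quotient.mk J f := LinearMap.congr_fun hL f
    rwa [RingHom.mem_ker.1 hf, map_zero, eq_comm, Ideal.Quotient.eq_zero_iff_mem] at h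
  · rintro _ ⟨r, r', c, c', -, -, rfl⟩
    exact segre_segreMinor e r r' c c'

end Segre

section SegreWeight

variable {ρ κ M : Type*} [AddCommMonoid M]

/-- The weights giving degree `a` to the variables `s_r` and degree `b` to the variables `x_c`. For
`a = (1, 0)` and `b = (0, 1)` this is the bigrading of the coordinate ring of a product of two
projective spaces. -/
abbrev segreWeight (a b : M) : ρ ⊕ κ → M := Sum.elim (fun _ => a) fun _ => b

lemma weight_segreWeight [Fintype ρ] [Fintype κ] (a b : M) (y : ρ ⊕ κ →₀ ℕ) :
    Finsupp.weight (segreWeight a b) y =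
      (∑ r, y (Sum.inl r)) • a + (∑ c, y (Sum.inr c)) • b := by
  simp [Finsupp.weight_eq_sum, Finset.sum_smul]

lemma weight_segreWeight_segreExp {ι : Type*} (e : ι ≃ ρ × κ) (a b : M) (d : ι →₀ ℕ) :
    Finsupp.weight (segreWeight a b) (segreExp e d) = d.degree • (a + b) := by
  induction d using Finsupp.induction_linear with
  | zero => simp
  | add f g hf hg => rw [map_add, map_add, hf, hg, map_add, add_smul]
  | single i n => simp [segreExp_single, Finsupp.weight_single, smul_add]

/-- The forms of bidegree `m` in the variables `s_r` and `x_c`. -/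
abbrev bihomogeneousSubmodule (k ρ κ : Type*) [CommSemiring k] (m : ℕ × ℕ) :
    Submodule k (MvPolynomial (ρ ⊕ κ) k) :=
  weightedHomogeneousSubmodule k (segreWeight (1, 0) (0, 1)) m

lemma weight_bidegree_eq_iff [Fintype ρ] [Fintype κ] {y : ρ ⊕ κ →₀ ℕ} {m : ℕ × ℕ} :
    Finsupp.weight (segreWeight ((1, 0) : ℕ × ℕ) (0, 1)) y = m ↔
      ∑ r, y (Sum.inl r) = m.1 ∧ ∑ c, y (Sum.inr c) = m.2 := by
  simp [weight_segreWeight, Prod.ext_iff]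

lemma finrank_bihomogeneousSubmodule {k : Type*} [CommSemiring k] [StrongRankCondition k]
    [Fintype ρ] [Fintype κ] (m : ℕ × ℕ) :
    Module.finrank k (bihomogeneousSubmodule k ρ κ m) =
      (Fintype.card ρ).multichoose m.1 * (Fintype.card κ).multichoose m.2 := by
  classical
  have hcard := Finset.card_product (Finset.univ.finsuppAntidiag m.1 : Finset (ρ →₀ ℕ))
    (Finset.univ.finsuppAntidiag m.2 : Finset (κ →₀ ℕ))
  rw [Finset.card_finsuppAntidiag_nat_eq_multichoose,
    Finset.card_finsuppAntidiag_nat_eq_multichoose, Finset.card_univ, Finset.card_univ] at hcard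
  rw [finrank_weightedHomogeneousSubmodule, ← hcard, ← Nat.card_eq_finsetCard]
  refine Nat.card_congr (Finsupp.sumFinsuppEquivProdFinsupp.subtypeEquiv fun y => ?_)
  rw [weight_bidegree_eq_iff, Finset.mem_product, Finset.mem_finsuppAntidiag,
    Finset.mem_finsuppAntidiag, and_iff_left (Finset.subset_univ _),
    and_iff_left (Finset.subset_univ _)]
  rfl

end SegreWeight

section SegreImage

variable {k ι ρ κ : Type*} (e : ι ≃ ρ × κ)

lemma exists_segreExp_eq [Fintype ρ] [Fintype κ] {y : ρ ⊕ κ →₀ ℕ}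
    (hy : ∑ r, y (Sum.inl r) = ∑ c, y (Sum.inr c)) : ∃ d, segreExp e d = y := by
  classical
  induction h : ∑ r, y (Sum.inl r) generalizing y with
  | zero =>
    refine ⟨0, Finsupp.ext ?_⟩
    rw [h] at hy
    rintro (i | i)
    · simp [Finset.sum_eq_zero_iff.1 h i (Finset.mem_univ i)]
    · simp [Finset.sum_eq_zero_iff.1 hy.symm i (Finset.mem_univ i)]
  | succ t ih =>
    obtain ⟨r, -, hr⟩ := Finset.exists_ne_zero_of_sum_ne_zero (h.trans_ne t.succ_ne_zero)
    obtain ⟨c, -, hc⟩ := Finset.exists_ne_zero_of_sum_ne_zero ((hy ▸ h).trans_ne t.succ_ne_zero)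
    have hle : segreExp e (Finsupp.single (e.symm (r, c)) 1) ≤ y := by
      rw [segreExp_single, Equiv.apply_symm_apply]
      rintro (i | i) <;> simp only [Finsupp.add_apply, Finsupp.single_apply] <;> grind
    obtain ⟨y, rfl⟩ := exists_add_of_le hle
    have sum_inl : ∑ r', (segreExp e (Finsupp.single (e.symm (r, c)) 1) + y) (Sum.inl r') =
        1 + ∑ r', y (Sum.inl r') := by
      simp [segreExp_single, Finset.sum_add_distrib, Finsupp.single_apply]
    have sum_inr : ∑ c', (segreExp e (Finsupp.single (e.symm (r, c)) 1) + y) (Sum.inr c') =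
        1 + ∑ c', y (Sum.inr c') := by
      simp [segreExp_single, Finset.sum_add_distrib, Finsupp.single_apply]
    obtain ⟨d, rfl⟩ := ih (y := y) (by omega) (by omega)
    exact ⟨Finsupp.single (e.symm (r, c)) 1 + d, map_add _ _ _⟩

variable [CommRing k]

lemma isWeightedHomogeneous_segre {M : Type*} [AddCommMonoid M] {a b : M} (hab : a + b = 0)
    (f : MvPolynomial ι k) : IsWeightedHomogeneous (segreWeight a b) (segre e f) 0 := by
  induction f using MvPolynomial.induction_on' with
  | monomial d c =>
    rw [segre_monomial]
    exact isWeightedHomogeneous_monomial _ _ _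
      (by rw [weight_segreWeight_segreExp, hab, smul_zero])
  | add f g hf hg => exact map_add (segre e) f g ▸ hf.add hg

lemma exists_sum_X_mul_segre_eq [Fintype ρ] [Finite κ] {g : MvPolynomial (ρ ⊕ κ) k}
    (hg : IsWeightedHomogeneous (segreWeight (1 : ℤ) (-1)) g 1) :
    ∃ h : ρ → MvPolynomial ι k, ∑ r, X (Sum.inl r) * segre e (h r) = g := by
  classical
  cases nonempty_fintype κ
  let L : (ρ → MvPolynomial ι k) →ₗ[k] MvPolynomial (ρ ⊕ κ) k :=
    ∑ r, LinearMap.mulLeft k (X (Sum.inl r)) ∘ₗ (segre e).toLinearMap ∘ₗ LinearMap.proj r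
  have hL (h : ρ → MvPolynomial ι k) : L h = ∑ r, X (Sum.inl r) * segre e (h r) := by simp [L]
  suffices h : weightedHomogeneousSubmodule k (segreWeight (1 : ℤ) (-1)) 1 ≤ LinearMap.range L by
    obtain ⟨h, hh⟩ := h hg
    exact ⟨h, hL h ▸ hh⟩
  rw [weightedHomogeneousSubmodule_eq_span, Submodule.span_le]
  rintro _ ⟨y, hy, rfl⟩
  have hy : ∑ r, y (Sum.inl r) = 1 + ∑ c, y (Sum.inr c) := by
    rw [Set.mem_ofPred_eq, weight_segreWeight, nsmul_eq_mul, nsmul_eq_mul] at hy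
    omega
  obtain ⟨r, -, hr⟩ := Finset.exists_ne_zero_of_sum_ne_zero
    (show ∑ r, y (Sum.inl r) ≠ 0 by omega)
  obtain ⟨y, rfl⟩ := exists_add_of_le (show Finsupp.single (Sum.inl r) 1 ≤ y by
    simpa [Nat.one_le_iff_ne_zero] using hr)
  obtain ⟨d, rfl⟩ := exists_segreExp_eq e (y := y) (by
    simpa [Finset.sum_add_distrib, Finsupp.single_apply] using hy)
  refine ⟨Pi.single r (monomial d 1), ?_⟩
  rw [hL, Finset.sum_eq_single r (fun r' _ hr' => by simp [hr']) (by simp), Pi.single_eq_same,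
    segre_monomial, X, monomial_mul, one_mul]

lemma map_segre_homogeneousSubmodule [Finite ρ] [Finite κ] (t : ℕ) :
    (homogeneousSubmodule ι k t).map (segre e).toLinearMap =
      bihomogeneousSubmodule k ρ κ (t, t) := by
  cases nonempty_fintype ρ
  cases nonempty_fintype κ
  have hdeg (d : ι →₀ ℕ) : Finsupp.weight (segreWeight ((1, 0) : ℕ × ℕ) (0, 1))
      (segreExp e d) = (t, t) ↔ d.degree = t := by
    simp [weight_segreWeight_segreExp]
  rw [homogeneousSubmodule_eq_span, bihomogeneousSubmodule, weightedHomogeneousSubmodule_eq_span,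
    Submodule.map_span]
  congr 1
  ext f
  constructor
  · rintro ⟨_, ⟨d, hd, rfl⟩, rfl⟩
    exact ⟨segreExp e d, (hdeg d).2 hd, (segre_monomial e d 1).symm⟩
  · rintro ⟨y, hy, rfl⟩
    have hy' := weight_bidegree_eq_iff.1 hy
    obtain ⟨d, rfl⟩ := exists_segreExp_eq e (hy'.1.trans hy'.2.symm)
    exact ⟨_, ⟨d, (hdeg d).1 hy, rfl⟩, segre_monomial e d 1⟩

theorem finrank_homogeneousSubmodule_add_of_isBihomogeneous {k : Type*} [Field k] [Fintype ρ]
    [Fintype κ] {m m' : ℕ × ℕ} {t : ℕ} {F : MvPolynomial (ρ ⊕ κ) k}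
    (hF : F ∈ bihomogeneousSubmodule k ρ κ m) (hF_ne : F ≠ 0) (hm : m + m' = (t, t)) :
    Module.finrank k (homogeneousSubmodule ι k t) +
        (Fintype.card ρ).multichoose m'.1 * (Fintype.card κ).multichoose m'.2 =
      (Fintype.card ρ).multichoose t * (Fintype.card κ).multichoose t +
        Module.finrank k ↥(homogeneousSubmodule ι k t ⊓
          ((Ideal.span {F}).comap (segre e)).restrictScalars k) := by
  have : Finite ι := Finite.of_equiv _ e.symm
  have : FiniteDimensional k (homogeneousSubmodule ι k t) :=
    Module.Finite.iff_fg.2 (homogeneousSubmodule_fg ι k t)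
  have h := finrank_add_finrank_map_inf (segre e).toLinearMap (homogeneousSubmodule ι k t)
    ((Ideal.span {F}).restrictScalars k)
  have hmul := (Submodule.equivMapOfInjective (LinearMap.mulLeft k F)
    (fun _ _ h => mul_left_cancel₀ hF_ne h) (bihomogeneousSubmodule k ρ κ m')).finrank_eq
  rw [map_segre_homogeneousSubmodule, finrank_bihomogeneousSubmodule] at h
  rw [← hm, weightedHomogeneousSubmodule_inf_span_singleton hF, ← hmul,
    finrank_bihomogeneousSubmodule, hm] at h
  exact h

end SegreImage

section SegreHeight

variable {k ι ρ κ : Type*} [CommRing k] (e : ι ≃ ρ × κ)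

/-- The comorphism parametrizing the matrices whose columns in `D` are proportional: the columns
outside `D` keep their entries `t_i` as free coordinates, the entries of those in `D` become
`s_r x_c`. -/
def partialSegre (k : Type*) {ι ρ κ : Type*} [CommRing k] (e : ι ≃ ρ × κ) [DecidableEq κ]
    (D : Finset κ) : MvPolynomial ι k →ₐ[k] MvPolynomial (ι ⊕ (ρ ⊕ κ)) k :=
  aeval fun i => if (e i).2 ∈ D then X (Sum.inr (Sum.inl (e i).1)) * X (Sum.inr (Sum.inr (e i).2))
    else X (Sum.inl i)

section DecidableEq

variable [DecidableEq κ]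

lemma partialSegre_X (D : Finset κ) (i : ι) :
    partialSegre k e D (X i) =
      if (e i).2 ∈ D then X (Sum.inr (Sum.inl (e i).1)) * X (Sum.inr (Sum.inr (e i).2))
      else X (Sum.inl i) :=
  aeval_X _ _

lemma partialSegre_comp (D D' : Finset κ) :
    (aeval (Sum.elim (partialSegre k e D' ∘ X) (X ∘ Sum.inr))).comp (partialSegre k e D) =
      partialSegre k e (D ∪ D') := by
  refine algHom_ext fun i => ?_
  rw [AlgHom.comp_apply, partialSegre_X, partialSegre_X]
  by_cases hD : (e i).2 ∈ D <;> simp [hD, partialSegre_X]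

lemma partialSegre_segreMinor_eq_zero {D : Finset κ} {c c' : κ} (hc : c ∈ D) (hc' : c' ∈ D)
    (r r' : ρ) : partialSegre k e D (segreMinor k e r r' c c') = 0 := by
  simp only [segreMinor, map_sub, map_mul, partialSegre_X, Equiv.apply_symm_apply, hc, hc', if_true]
  ring

lemma partialSegre_segreMinor_ne_zero [Nontrivial k] {D : Finset κ} {c c' : κ} (hc : c ∈ D)
    (hc' : c' ∉ D) {r r' : ρ} (hr : r ≠ r') :
    partialSegre k e D (segreMinor k e r r' c c') ≠ 0 := by
  classical
  intro h
  have := congrArg (eval (Sum.elim (fun i => if i = e.symm (r', c') then (1 : k) else 0)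
    (Sum.elim (fun s => if s = r then 1 else 0) 1))) h
  simp [segreMinor, partialSegre_X, hc, hc', hr.symm] at this

lemma ker_partialSegre_lt_ker_partialSegre_insert [Nontrivial k] [Nontrivial ρ] {D : Finset κ}
    (hD : D.Nonempty) {c : κ} (hc : c ∉ D) :
    RingHom.ker (partialSegre k e D) < RingHom.ker (partialSegre k e (insert c D)) := by
  obtain ⟨c', hc'⟩ := hD
  obtain ⟨r, r', hr⟩ := exists_pair_ne ρ
  have hcomp := partialSegre_comp (k := k) e D {c}
  rw [Finset.union_singleton] at hcomp
  rw [← hcomp]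
  refine ker_lt_ker_comp ?_ (partialSegre_segreMinor_ne_zero e hc' hc hr)
  rw [← AlgHom.comp_apply, hcomp]
  exact partialSegre_segreMinor_eq_zero e (Finset.mem_insert_of_mem hc')
    (Finset.mem_insert_self c D) r r'

lemma card_le_height_ker_partialSegre_add_one [IsDomain k] [Nontrivial ρ] (D : Finset κ) :
    D.card ≤ (RingHom.ker (partialSegre k e D)).height + 1 := by
  have isPrime_ker (D : Finset κ) : (RingHom.ker (partialSegre k e D)).IsPrime :=
    RingHom.ker_isPrime _
  obtain rfl | hD := D.eq_empty_or_nonempty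
  · simp
  induction hD using Finset.Nonempty.cons_induction with
  | singleton c => simp
  | cons c D hc hD ih =>
    rw [Finset.card_cons, Finset.cons_eq_insert, Nat.cast_add, Nat.cast_one]
    gcongr
    exact ih.trans (Ideal.height_add_one_le_of_lt_of_isPrime
      (ker_partialSegre_lt_ker_partialSegre_insert e hD hc))

end DecidableEq

theorem card_le_height_ker_segre_add_one [IsDomain k] [Nontrivial ρ] [Fintype κ] :
    Fintype.card κ ≤ (RingHom.ker (segre (k := k) e)).height + 1 := by
  classical
  have hcomp : partialSegre k e Finset.univ = (rename Sum.inr).comp (segre e) :=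
    algHom_ext fun i => by simp [partialSegre_X]
  have hker : RingHom.ker (partialSegre k e Finset.univ) = RingHom.ker (segre (k := k) e) := by
    ext f
    rw [RingHom.mem_ker, RingHom.mem_ker, hcomp, AlgHom.comp_apply,
      map_eq_zero_iff _ (rename_injective _ Sum.inr_injective)]
  exact hker ▸ card_le_height_ker_partialSegre_add_one (k := k) e Finset.univ

end SegreHeight

section Edge

/-- The matrix `t_0, …, t_3; t_4, …, t_7` of the coordinates on `ℙ⁷`. -/
def edgeIndex : Fin 8 ≃ Fin 2 × Fin 4 :=
  (finProdFinEquiv (m := 2) (n := 4)).symm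

/-- The comorphism of the Segre embedding `ℙ¹ × ℙ³ ⊂ ℙ⁷`. -/
abbrev edgeSegre : MvPolynomial (Fin 8) ℚ →ₐ[ℚ] MvPolynomial (Fin 2 ⊕ Fin 4) ℚ :=
  segre edgeIndex

/-- The quadratic forms `A`, `B` on `ℙ³` such that `E ⊂ ℙ¹ × ℙ³` is given by `s_0 A + s_1 B`. -/
def edgePencil : Fin 2 → MvPolynomial (Fin 4) ℚ :=
  ![X 0 ^ 2 + X 2 ^ 2 + X 3 ^ 2, X 1 ^ 2 + X 1 * X 2 + X 0 * X 3]

/-- The form of bidegree `(1, 2)` defining `E` in `ℙ¹ × ℙ³`. -/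
def edgeForm : MvPolynomial (Fin 2 ⊕ Fin 4) ℚ :=
  ∑ r, X (Sum.inl r) * rename Sum.inr (edgePencil r)

lemma edgeForm_eq : edgeForm =
    X (.inl 0) * (X (.inr 0) ^ 2 + X (.inr 2) ^ 2 + X (.inr 3) ^ 2) +
      X (.inl 1) * (X (.inr 1) ^ 2 + X (.inr 1) * X (.inr 2) + X (.inr 0) * X (.inr 3)) := by
  simp [edgeForm, edgePencil]

lemma isWeightedHomogeneous_edgeForm {M : Type*} [AddCommMonoid M] (a b : M) :
    IsWeightedHomogeneous (segreWeight a b) edgeForm (a + (b + b)) := by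
  have hs (r : Fin 2) : IsWeightedHomogeneous (segreWeight a b)
      (X (.inl r) : MvPolynomial (Fin 2 ⊕ Fin 4) ℚ) a := isWeightedHomogeneous_X _ _ _
  have hx (c : Fin 4) : IsWeightedHomogeneous (segreWeight a b)
      (X (.inr c) : MvPolynomial (Fin 2 ⊕ Fin 4) ℚ) b := isWeightedHomogeneous_X _ _ _
  have hxx (c c' : Fin 4) := (hx c).mul (hx c')
  rw [edgeForm_eq]
  simp only [sq]
  exact ((hs 0).mul (((hxx 0 0).add (hxx 2 2)).add (hxx 3 3))).add
    ((hs 1).mul (((hxx 1 1).add (hxx 1 2)).add (hxx 0 3)))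

lemma edgeForm_ne_zero : edgeForm ≠ 0 := fun h => by
  have := congrArg (eval fun _ => (1 : ℚ)) h
  norm_num [edgeForm_eq] at this

lemma edgeForm_isRelPrime_X_mul_X : IsRelPrime edgeForm (X (.inl 1) * X (.inr 3)) := by
  have not_dvd (i : Fin 2 ⊕ Fin 4) (hi : Sum.elim ![(1 : ℚ), 0] ![1, 0, 0, 0] i = 0) :
      ¬ X i ∣ edgeForm := by
    rintro ⟨g, hg⟩
    have := congrArg (eval (Sum.elim ![1, 0] ![1, 0, 0, 0])) hg
    simp [edgeForm_eq, hi] at this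
  exact ((X_prime.irreducible.isRelPrime_iff_not_dvd.2 (not_dvd _ rfl)).mul_left
    (X_prime.irreducible.isRelPrime_iff_not_dvd.2 (not_dvd _ rfl))).symm

/-- The pairs of columns of the minors `edgeQuadrics 0, …, edgeQuadrics 5`. -/
def edgeColumns : Fin 6 → Fin 4 × Fin 4 :=
  ![(0, 1), (0, 2), (0, 3), (1, 2), (1, 3), (2, 3)]

lemma edgeIndex_symm_apply (r : Fin 2) (c : Fin 4) :
    edgeIndex.symm (r, c) = (![![0, 1, 2, 3], ![4, 5, 6, 7]] : Fin 2 → Fin 4 → Fin 8) r c := by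
  decide +revert

lemma edgeQuadrics_castAdd (i : Fin 6) : edgeQuadrics (Fin.castAdd 2 i) =
    segreMinor ℚ edgeIndex 0 1 (edgeColumns i).1 (edgeColumns i).2 := by
  fin_cases i <;> simp [edgeQuadrics, segreMinor, edgeColumns, edgeIndex_symm_apply] <;> ring

lemma edgeSegre_edgeQuadrics_castAdd (i : Fin 6) :
    edgeSegre (edgeQuadrics (Fin.castAdd 2 i)) = 0 := by
  rw [edgeQuadrics_castAdd, segre_segreMinor]

lemma edgeSegre_eq : edgeSegre = aeval
    ![X (.inl 0) * X (.inr 0), X (.inl 0) * X (.inr 1), X (.inl 0) * X (.inr 2),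
      X (.inl 0) * X (.inr 3), X (.inl 1) * X (.inr 0), X (.inl 1) * X (.inr 1),
      X (.inl 1) * X (.inr 2), X (.inl 1) * X (.inr 3)] := by
  refine algHom_ext fun i => ?_
  rw [segre_X, aeval_X]
  fin_cases i <;> rfl

lemma edgeSegre_edgeQuadrics_natAdd (r : Fin 2) :
    edgeSegre (edgeQuadrics (Fin.natAdd 6 r)) = X (.inl r) * edgeForm := by
  fin_cases r <;> simp [edgeSegre_eq, edgeQuadrics, edgeForm_eq] <;> ring

lemma edgeQuadrics_mem (i : Fin 8) : edgeQuadrics i ∈ idealEdge :=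
  Ideal.subset_span ⟨i, rfl⟩

lemma ker_edgeSegre_le : RingHom.ker edgeSegre ≤ idealEdge := by
  rw [ker_segre_eq_span, Ideal.span_le]
  rintro _ ⟨r, r', c, c', hr, hc, rfl⟩
  obtain ⟨rfl, rfl⟩ : r = 0 ∧ r' = 1 := by omega
  obtain ⟨i, hi⟩ : ∃ i, edgeColumns i = (c, c') := by decide +revert
  have hminor := edgeQuadrics_castAdd i
  rw [hi] at hminor
  exact hminor ▸ edgeQuadrics_mem _

theorem idealEdge_eq_comap : idealEdge = (Ideal.span {edgeForm}).comap edgeSegre := by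
  refine le_antisymm (Ideal.span_le.2 ?_) fun f hf => ?_
  · rintro _ ⟨i, rfl⟩
    rw [SetLike.mem_coe, Ideal.mem_comap, Ideal.mem_span_singleton]
    induction i using Fin.addCases (m := 6) (n := 2) with
    | left i => exact edgeSegre_edgeQuadrics_castAdd i ▸ dvd_zero _
    | right r => exact edgeSegre_edgeQuadrics_natAdd r ▸ dvd_mul_left _ _
  · have himage : edgeSegre f ∈
        weightedHomogeneousSubmodule ℚ (segreWeight (1 : ℤ) (-1)) (1 + (-1 + -1) + 1) ⊓
          (Ideal.span {edgeForm}).restrictScalars ℚ :=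
      ⟨isWeightedHomogeneous_segre edgeIndex (by norm_num) f, hf⟩
    rw [weightedHomogeneousSubmodule_inf_span_singleton (isWeightedHomogeneous_edgeForm _ _)]
      at himage
    obtain ⟨g, hg, hFg⟩ := himage
    obtain ⟨h, rfl⟩ := exists_sum_X_mul_segre_eq edgeIndex hg
    have hsum : ∑ r, edgeQuadrics (Fin.natAdd 6 r) * h r ∈ idealEdge :=
      sum_mem fun r _ => idealEdge.mul_mem_right _ (edgeQuadrics_mem _)
    have hdiff : f - ∑ r, edgeQuadrics (Fin.natAdd 6 r) * h r ∈ RingHom.ker edgeSegre := by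
      rw [RingHom.mem_ker, map_sub, sub_eq_zero, ← hFg, LinearMap.mulLeft_apply, Finset.mul_sum,
        map_sum]
      refine Finset.sum_congr rfl fun r _ => ?_
      rw [map_mul, edgeSegre_edgeQuadrics_natAdd]
      ring
    exact (Submodule.sub_mem_iff_left _ hsum).1 (ker_edgeSegre_le hdiff)

theorem idealEdgeSat_eq_comap : idealEdgeSat = (Ideal.span {edgeForm}).comap edgeSegre := by
  refine le_antisymm (iSup_colon_pow_le idealEdge_eq_comap.le (a := X 7)
    (Ideal.subset_span (Set.mem_range_self 7)) fun f hf => ?_)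
    (idealEdge_eq_comap ▸ le_iSup_colon_pow _ _)
  have hX : edgeSegre (X 7) = X (.inl 1) * X (.inr 3) := segre_X _ _
  rw [Ideal.mem_comap, Ideal.mem_span_singleton, map_mul, hX] at hf
  exact Ideal.mem_span_singleton.2 (edgeForm_isRelPrime_X_mul_X.dvd_of_dvd_mul_right hf)

/-- The Hilbert polynomial `(t + 1) C(t + 3, 3) - t C(t + 1, 3)` of `E`. -/
def edgeHilbertPolynomial : Polynomial ℚ :=
  .C (7 / 6) * .X ^ 3 + .C 3 * .X ^ 2 + .C (17 / 6) * .X + .C 1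

lemma natDegree_edgeHilbertPolynomial : edgeHilbertPolynomial.natDegree = 3 := by
  unfold edgeHilbertPolynomial
  compute_degree!

lemma leadingCoeff_edgeHilbertPolynomial : edgeHilbertPolynomial.leadingCoeff = 7 / 6 := by
  rw [Polynomial.leadingCoeff, natDegree_edgeHilbertPolynomial]
  simp [edgeHilbertPolynomial, Polynomial.coeff_one]

lemma cast_multichoose_four (m : ℕ) :
    (Nat.multichoose 4 m : ℚ) = (m + 1) * (m + 2) * (m + 3) / 6 := by
  have h : (m + 3).factorial = (m + 3) * (m + 2) * (m + 1) * m.factorial := by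
    simp only [Nat.factorial_succ, mul_assoc]
  have hm : (m.factorial : ℚ) ≠ 0 := Nat.cast_ne_zero.2 m.factorial_ne_zero
  rw [Nat.multichoose_eq, add_comm 4 m, Nat.add_sub_assoc (by norm_num), Nat.cast_add_choose, h,
    show Nat.factorial (4 - 1) = 6 from rfl]
  push_cast
  field_simp

theorem finrank_sub_finrank_inf_idealEdgeSat {t : ℕ} (ht : 2 ≤ t) :
    (Module.finrank ℚ ↥(homogeneousSubmodule (Fin 8) ℚ t) : ℚ) -
      Module.finrank ℚ ↥(homogeneousSubmodule (Fin 8) ℚ t ⊓ idealEdgeSat.restrictScalars ℚ) =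
        edgeHilbertPolynomial.eval (t : ℚ) := by
  obtain ⟨n, rfl⟩ := exists_add_of_le ht
  have h := finrank_homogeneousSubmodule_add_of_isBihomogeneous edgeIndex
    (isWeightedHomogeneous_edgeForm _ _) edgeForm_ne_zero (m' := (n + 1, n)) (t := 2 + n)
    (by rw [Prod.mk_add_mk, Prod.mk_add_mk, Prod.mk_add_mk, Prod.mk.injEq]; omega)
  rw [← idealEdgeSat_eq_comap] at h
  simp only [Fintype.card_fin, Nat.multichoose_two] at h
  have h := congrArg (Nat.cast : ℕ → ℚ) h
  push_cast [cast_multichoose_four] at h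
  simp only [edgeHilbertPolynomial, Polynomial.eval_add, Polynomial.eval_mul, Polynomial.eval_C,
    Polynomial.eval_pow, Polynomial.eval_X]
  push_cast
  linear_combination h

lemma four_le_height_idealEdgeSat : 4 ≤ idealEdgeSat.height := by
  have hlt : RingHom.ker edgeSegre < idealEdgeSat := by
    rw [idealEdgeSat_eq_comap]
    refine SetLike.lt_iff_le_and_exists.2
      ⟨Ideal.ker_le_comap _, edgeQuadrics (Fin.natAdd 6 (0 : Fin 2)), ?_, ?_⟩
    · rw [Ideal.mem_comap, edgeSegre_edgeQuadrics_natAdd]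
      exact Ideal.mul_mem_left _ _ (Ideal.mem_span_singleton_self _)
    · rw [RingHom.mem_ker, edgeSegre_edgeQuadrics_natAdd]
      exact mul_ne_zero (X_ne_zero _) edgeForm_ne_zero
  have : (RingHom.ker edgeSegre).IsPrime := RingHom.ker_isPrime _
  exact (card_le_height_ker_segre_add_one edgeIndex).trans
    (Order.add_one_le_of_lt (Ideal.height_strict_mono_of_isPrime hlt))

lemma ringKrullDim_quotient_idealEdgeSat_le :
    ringKrullDim (MvPolynomial (Fin 8) ℚ ⧸ idealEdgeSat) ≤ 4 := by
  have h := height_add_ringKrullDim_quotient_le idealEdgeSat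
  rw [MvPolynomial.ringKrullDim_of_isNoetherianRing, ringKrullDim_eq_zero_of_field, zero_add,
    Nat.card_fin] at h
  have h4 : ((4 : ℕ) : WithBot ℕ∞) ≤ idealEdgeSat.height :=
    WithBot.coe_le_coe.2 four_le_height_idealEdgeSat
  refine ENat.WithBot.add_le_add_natCast_left_iff.1 ((add_le_add_left h4 _).trans (h.trans_eq ?_))
  norm_num

/-- The comorphism of the rational parametrization `x ↦ ((-B(x) : A(x)), x)` of `E ⊂ ℙ¹ × ℙ³`. -/
def edgeParam : MvPolynomial (Fin 8) ℚ →ₐ[ℚ] MvPolynomial (Fin 4) ℚ :=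
  (aeval (Sum.elim ![-edgePencil 1, edgePencil 0] X)).comp edgeSegre

lemma idealEdgeSat_le_ker_edgeParam : idealEdgeSat ≤ RingHom.ker edgeParam := by
  rw [idealEdgeSat_eq_comap, edgeParam]
  intro f hf
  obtain ⟨g, hg⟩ := Ideal.mem_span_singleton.1 hf
  have hF : aeval (Sum.elim ![-edgePencil 1, edgePencil 0] X) edgeForm = 0 := by
    simp only [edgeForm, Fin.sum_univ_two, map_add, map_mul, aeval_X, aeval_rename, Sum.elim_inl,
      Sum.elim_comp_inr, aeval_X_left_apply, Matrix.cons_val_zero, Matrix.cons_val_one]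
    ring
  rw [RingHom.mem_ker, AlgHom.comp_apply, hg, map_mul, hF, zero_mul]

lemma edgeParam_X_natAdd (i : Fin 4) : edgeParam (X (Fin.natAdd 4 i)) = edgePencil 0 * X i := by
  have hi : edgeIndex (Fin.natAdd 4 i) = (1, i) := by decide +revert
  rw [edgeParam, AlgHom.comp_apply, segre_X, hi]
  simp

lemma le_ringKrullDim_quotient_idealEdgeSat :
    4 ≤ ringKrullDim (MvPolynomial (Fin 8) ℚ ⧸ idealEdgeSat) := by
  refine natCast_le_ringKrullDim_quotient_of_flagRestrict idealEdgeSat_le_ker_edgeParam fun i =>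
    ⟨X (Fin.natAdd 4 i), ?_, ?_⟩
  · rw [edgeParam_X_natAdd, map_mul, flagRestrict_X, if_pos i.castSucc_lt_succ, mul_zero]
  · have hi : ¬ 3 < i.castSucc := by decide +revert
    rw [edgeParam_X_natAdd, map_mul, flagRestrict_X, if_neg (lt_irrefl _)]
    refine mul_ne_zero (fun h => ?_) (X_ne_zero i)
    have := congrArg (eval ![(0 : ℚ), 0, 0, 1]) h
    simp [edgePencil, flagRestrict_X, hi, apply_ite] at this

theorem ringKrullDim_quotient_idealEdgeSat :
    ringKrullDim (MvPolynomial (Fin 8) ℚ ⧸ idealEdgeSat) = (4 : ℕ) :=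
  le_antisymm ringKrullDim_quotient_idealEdgeSat_le le_ringKrullDim_quotient_idealEdgeSat

end Edge

/-- The 8 listed quadrics define a projective scheme `E ⊂ ℙ⁷` of dimension `3` (its
affine cone has Krull dimension `4`) and degree `7` (its Hilbert polynomial has degree
`3` and leading coefficient `7/3!`). -/
theorem edge_variety_dim_three_deg_seven :
    ringKrullDim (MvPolynomial (Fin 8) ℚ ⧸ idealEdgeSat) = (4 : ℕ) ∧
    ∃ Q : Polynomial ℚ, Q.natDegree = 3 ∧ Q.leadingCoeff * 6 = 7 ∧
      ∃ N : ℕ, ∀ t ≥ N,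
        ((Module.finrank ℚ ↥(homogeneousSubmodule (Fin 8) ℚ t) : ℚ) -
          (Module.finrank ℚ ↥(homogeneousSubmodule (Fin 8) ℚ t ⊓
            Submodule.restrictScalars ℚ idealEdgeSat) : ℚ)) = Q.eval (t : ℚ) := by
  refine ⟨ringKrullDim_quotient_idealEdgeSat, edgeHilbertPolynomial,
    natDegree_edgeHilbertPolynomial, ?_, 2, fun t ht => finrank_sub_finrank_inf_idealEdgeSat ht⟩
  rw [leadingCoeff_edgeHilbertPolynomial]
  norm_num

end
end

section
/- The base locus of the Cremona transformation of P^20 defined by the 21 quadrics in equation (3) is a projective scheme of dimension 12 and degree 33 with Hilbert polynomial P(t) = C(t+8,8) − 12·C(t+9,9) + 45·C(t+10,10) − 66·C(t+11,11) + 33·C(t+12,12). -/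
open MvPolynomial

noncomputable section

/-- Coordinates `x₀, …, x₂₀` on `ℙ²⁰`. -/
abbrev y : Fin 21 → MvPolynomial (Fin 21) ℚ := X

/-- The 21 quadrics of equation (3), defining the Cremona map `ω : ℙ²⁰ ⇢ ℙ²⁰`. -/
def omegaP20 : Fin 21 → MvPolynomial (Fin 21) ℚ :=
  ![y 10 * y 15 - y 9 * y 16 + y 6 * y 20,
    y 10 * y 14 - y 8 * y 16 + y 5 * y 20,
    y 9 * y 14 - y 8 * y 15 + y 4 * y 20,
    y 6 * y 14 - y 5 * y 15 + y 4 * y 16,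
    y 11 * y 13 - y 16 * y 17 + y 15 * y 18 - y 14 * y 19 + y 12 * y 20,
    y 3 * y 13 - y 10 * y 17 + y 9 * y 18 - y 8 * y 19 + y 7 * y 20,
    y 10 * y 12 - y 2 * y 13 - y 7 * y 16 - y 6 * y 18 + y 5 * y 19,
    y 9 * y 12 - y 1 * y 13 - y 7 * y 15 - y 6 * y 17 + y 4 * y 19,
    y 8 * y 12 - y 0 * y 13 - y 7 * y 14 - y 5 * y 17 + y 4 * y 18,
    y 10 * y 11 - y 3 * y 16 + y 2 * y 20,
    y 9 * y 11 - y 3 * y 15 + y 1 * y 20,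
    y 8 * y 11 - y 3 * y 14 + y 0 * y 20,
    y 7 * y 11 - y 3 * y 12 + y 2 * y 17 - y 1 * y 18 + y 0 * y 19,
    y 6 * y 11 - y 2 * y 15 + y 1 * y 16,
    y 5 * y 11 - y 2 * y 14 + y 0 * y 16,
    y 4 * y 11 - y 1 * y 14 + y 0 * y 15,
    y 6 * y 8 - y 5 * y 9 + y 4 * y 10,
    y 3 * y 6 - y 2 * y 9 + y 1 * y 10,
    y 3 * y 5 - y 2 * y 8 + y 0 * y 10,
    y 3 * y 4 - y 1 * y 8 + y 0 * y 9,
    y 2 * y 4 - y 1 * y 5 + y 0 * y 6]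

/-- The ideal generated by the 21 quadrics of equation (3). -/
def idealOmegaP20 : Ideal (MvPolynomial (Fin 21) ℚ) := Ideal.span (Set.range omegaP20)

/-- Its saturation with respect to the irrelevant maximal ideal. -/
def idealOmegaP20Sat : Ideal (MvPolynomial (Fin 21) ℚ) :=
  ⨆ t : ℕ, idealOmegaP20.colon
    ((Ideal.span (Set.range (X : Fin 21 → MvPolynomial (Fin 21) ℚ)) ^ t :
      Ideal (MvPolynomial (Fin 21) ℚ)) : Submodule _ _)

/-!
Identify a point of `ℙ²⁰` with a pair of a skew form `ω` on a six-dimensional space and a vector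
`v`. The 21 quadrics are the Plücker relations of `ω` and the six entries of `ω v`, so the affine
cone over their zero locus consists of the pairs with `ω = s • a ∧ b` and `v` orthogonal to `a` and
`b`. A polynomial parametrization of this cone can be chosen in 13 variables such that the leading
monomials of the 21 coordinates are squarefree and their sets of variables form a distributive
lattice under inclusion.

Every product of two incomparable coordinates occurs in exactly one quadric, whose other terms are
products of pairs of the same total rank lying further apart. Hence modulo the quadrics every
monomial reduces to multichains of the lattice. Distinct multichains have distinct leading monomials
under the parametrization, so they are linearly independent there. It follows that the quadrics
generate the kernel of the parametrization, which is prime and hence saturated. The 13 parameters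
and the 13 algebraically independent coordinates along a maximal chain give the dimension. The
Hilbert function counts multichains, that is, it is `∑ C(t, d) f d`, where `f d` is the number of
chains of `d` elements strictly below the top of the lattice.
-/

section KrullDimension

theorem ringKrullDim_eq_of_isIntegral {A B : Type*} [CommRing A] [CommRing B] [Algebra A B]
    [Algebra.IsIntegral A B] (h : Function.Injective (algebraMap A B)) :
    ringKrullDim B = ringKrullDim A := by
  refine le_antisymm (Order.krullDim_le_of_strictMono (PrimeSpectrum.comap (algebraMap A B))
    fun P Q hPQ => Ideal.IsIntegral.comap_lt_comap hPQ) (iSup_le fun l => ?_)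
  have : FaithfulSMul A B := (faithfulSMul_iff_algebraMap_injective A B).mpr h
  obtain ⟨P, hP, hPl⟩ := Ideal.nonempty_primesOver (S := B) l.head.asIdeal
  obtain ⟨L, hL, -⟩ := Ideal.exists_ltSeries_of_hasGoingUp l P
  exact hL ▸ Order.LTSeries.length_le_krullDim L

universe u

variable (K : Type u) {A : Type*} [Field K] [CommRing A] [Algebra K A]

theorem ringKrullDim_eq_toNat_trdeg_s16 [IsDomain A] [Algebra.FiniteType K A] :
    ringKrullDim A = (Cardinal.toNat (Algebra.trdeg K A) : ℕ) := by
  obtain ⟨n, g, hg, hint⟩ := exists_integral_inj_algHom_of_fg K A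
  algebraize [g.toRingHom]
  have : Algebra.IsIntegral (MvPolynomial (Fin n) K) A := ⟨hint⟩
  have : FaithfulSMul (MvPolynomial (Fin n) K) A :=
    (faithfulSMul_iff_algebraMap_injective _ _).mpr hg
  have : IsScalarTower K (MvPolynomial (Fin n) K) A :=
    .of_algebraMap_eq fun x => (g.commutes x).symm
  have htrdeg := lift_trdeg_add_eq K (MvPolynomial (Fin n) K) A
  rw [trdeg_of_isDomain, trdeg_eq_zero] at htrdeg
  rw [ringKrullDim_eq_of_isIntegral (A := MvPolynomial (Fin n) K) hg, ← Cardinal.toNat_lift,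
    ← htrdeg]
  simp

variable {K}

theorem ringKrullDim_quotient_ker [Algebra.FiniteType K A] {τ : Type*} [Finite τ]
    (φ : A →ₐ[K] MvPolynomial τ K) {x : τ → A} (hx : AlgebraicIndependent K (φ ∘ x)) :
    ringKrullDim (A ⧸ RingHom.ker φ) = Nat.card τ := by
  have : IsDomain (A ⧸ RingHom.ker φ) :=
    (Ideal.Quotient.isDomain_iff_prime _).mpr (RingHom.ker_isPrime φ)
  have hle := lift_trdeg_le_of_injective _ (Ideal.kerLiftAlg_injective φ)
  have hx' : AlgebraicIndependent K (Ideal.Quotient.mkₐ K (RingHom.ker φ) ∘ x) :=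
    AlgebraicIndependent.of_comp (Ideal.kerLiftAlg φ) hx
  have hge := hx'.lift_cardinalMk_le_trdeg
  rw [trdeg_of_isDomain, Cardinal.lift_lift] at hle
  have hge' := Cardinal.lift_le.{u}.mpr hge
  rw [Cardinal.lift_lift] at hge'
  have htrdeg := congr_arg Cardinal.toNat (hle.antisymm (by simpa using hge'))
  rw [ringKrullDim_eq_toNat_trdeg_s16 K, ← Cardinal.toNat_lift, htrdeg]
  simp [Nat.card]

end KrullDimension

theorem iSup_colon_pow_eq_self {R : Type*} [CommRing R] {I J : Ideal R} [hI : I.IsPrime]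
    (hJ : ¬J ≤ I) : ⨆ t : ℕ, I.colon ((J ^ t : Ideal R) : Submodule R R) = I := by
  apply le_antisymm
  · refine iSup_le fun t r hr => ?_
    obtain ⟨x, hxJ, hxI⟩ := Set.not_subset.mp hJ
    have := Submodule.mem_colon.mp hr (x ^ t) (Ideal.pow_mem_pow hxJ t)
    exact (hI.mem_or_mem this).resolve_right fun h => hxI (hI.mem_of_pow_mem t h)
  · exact le_iSup_of_le 0 fun r hr => Submodule.mem_colon.mpr fun x _ => I.mul_mem_right x hr

section LeadingExponents

variable {σ τ R : Type*} [CommRing R] [IsDomain R] (ord : MonomialOrder τ)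
  {f : σ → MvPolynomial τ R}

theorem monomialOrder_degree_prod_pow (hf : ∀ v, f v ≠ 0) (m : σ →₀ ℕ) :
    ord.degree (m.prod fun v k => f v ^ k) =
      Finsupp.linearCombination ℕ (fun v => ord.degree (f v)) m := by
  rw [Finsupp.prod, ord.degree_prod fun v _ => pow_ne_zero _ (hf v),
    Finsupp.linearCombination_apply, Finsupp.sum]
  exact Finset.sum_congr rfl fun v _ => ord.degree_pow _ _

theorem eq_zero_of_aeval_eq_zero_of_injOn_degree (hf : ∀ v, f v ≠ 0) {s : Set (σ →₀ ℕ)}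
    (hs : Set.InjOn (Finsupp.linearCombination ℕ fun v => ord.degree (f v)) s)
    {p : MvPolynomial σ R} (hp : p ∈ restrictSupport R s) (h : aeval f p = 0) : p = 0 := by
  by_contra hp0
  set e := Finsupp.linearCombination ℕ fun v => ord.degree (f v)
  obtain ⟨m, hm, hmax⟩ := p.support.exists_max_image (fun m => ord.toSyn (e m))
    (support_nonempty.mpr hp0)
  have hps := (mem_restrictSupport_iff R).mp hp
  have hterm : ∀ n, coeff (e m) (C (coeff n p) * n.prod fun v k => f v ^ k) =
      coeff n p * coeff (e m) (n.prod fun v k => f v ^ k) := fun n => coeff_C_mul _ _ _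
  have hcoeff : coeff (e m) (aeval f p) =
      coeff m p * coeff (e m) (m.prod fun v k => f v ^ k) := by
    rw [aeval_def, eval₂_eq, coeff_sum, Finset.sum_eq_single_of_mem m hm, ← hterm]
    · rfl
    refine fun n hn hnm => (hterm n).trans (mul_eq_zero_of_right _ (ord.coeff_eq_zero_of_lt ?_))
    rw [monomialOrder_degree_prod_pow ord hf]
    exact (hmax n hn).lt_of_ne fun heq =>
      hnm (hs (hps hn) (hps hm) (ord.toSyn.injective heq))
  rw [h, coeff_zero, ← monomialOrder_degree_prod_pow ord hf] at hcoeff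
  have hne : (m.prod fun v k => f v ^ k) ≠ 0 :=
    Finset.prod_ne_zero_iff.mpr fun v _ => pow_ne_zero _ (hf v)
  exact mul_ne_zero (mem_support_iff.mp hm) ((ord.coeff_degree_ne_zero_iff).mpr hne) hcoeff.symm

theorem disjoint_ker_aeval_restrictSupport (hf : ∀ v, f v ≠ 0) {s : Set (σ →₀ ℕ)}
    (hs : Set.InjOn (Finsupp.linearCombination ℕ fun v => ord.degree (f v)) s) :
    Disjoint ((RingHom.ker (aeval (R := R) f)).restrictScalars R) (restrictSupport R s) :=
  Submodule.disjoint_def.mpr fun _ hker hp =>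
    eq_zero_of_aeval_eq_zero_of_injOn_degree ord hf hs hp hker

theorem algebraicIndependent_of_linearIndependent_degree (hf : ∀ v, f v ≠ 0)
    (h : LinearIndependent ℕ fun v => ord.degree (f v)) : AlgebraicIndependent R f := by
  refine (injective_iff_map_eq_zero _).mpr fun p hp => ?_
  exact eq_zero_of_aeval_eq_zero_of_injOn_degree ord hf (s := Set.univ) h.injOn
    ((mem_restrictSupport_iff R).mpr (Set.subset_univ _)) hp

end LeadingExponents

section StraighteningLaw

variable {σ R : Type*} [CommRing R] {I : Ideal (MvPolynomial σ R)} {s : Set (σ →₀ ℕ)}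

theorem monomial_mem_sup_restrictSupport (w : (σ →₀ ℕ) → ℕ)
    (h : ∀ m ∉ s, monomial m 1 ∈ I.restrictScalars R ⊔
      restrictSupport R {m' | m'.degree = m.degree ∧ w m' < w m}) (m : σ →₀ ℕ) :
    monomial m 1 ∈ I.restrictScalars R ⊔
      restrictSupport R {m' | m' ∈ s ∧ m'.degree = m.degree} := by
  induction hn : w m using Nat.strong_induction_on generalizing m with
  | _ n ih =>
  subst hn
  by_cases hm : m ∈ s
  · exact Submodule.mem_sup_right ((monomial_mem_restrictSupport R).mpr (Or.inl ⟨hm, rfl⟩))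
  refine (sup_le le_sup_left ?_ : _ ≤ I.restrictScalars R ⊔ _) (h m hm)
  rw [restrictSupport_eq_span, Submodule.span_le]
  rintro _ ⟨m', ⟨hdeg, hlt⟩, rfl⟩
  exact hdeg ▸ ih _ hlt m' rfl

theorem eq_of_le_of_disjoint_restrictSupport {J : Ideal (MvPolynomial σ R)} (hIJ : I ≤ J)
    (hdisj : Disjoint (J.restrictScalars R) (restrictSupport R s))
    (hspan : ∀ m, monomial m 1 ∈ I.restrictScalars R ⊔ restrictSupport R s) : I = J := by
  have htop : I.restrictScalars R ⊔ restrictSupport R s = ⊤ := by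
    rw [eq_top_iff, ← (basisMonomials σ R).span_eq, Submodule.span_le, coe_basisMonomials]
    rintro _ ⟨m, rfl⟩
    exact hspan m
  exact Submodule.restrictScalars_injective R _ _ <| eq_of_le_of_inf_le_of_sup_le hIJ
    (hdisj.eq_bot.le.trans bot_le) (htop ▸ le_top)

theorem homogeneousSubmodule_le_sup_restrictSupport
    (hspan : ∀ m : σ →₀ ℕ, monomial m 1 ∈ I.restrictScalars R ⊔
      restrictSupport R {m' | m' ∈ s ∧ m'.degree = m.degree}) (t : ℕ) :
    homogeneousSubmodule σ R t ≤
      I.restrictScalars R ⊔ restrictSupport R {m | m ∈ s ∧ m.degree = t} := by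
  have hrs : homogeneousSubmodule σ R t = restrictSupport R {m | m.degree = t} :=
    homogeneousSubmodule_eq_finsupp_supported σ R t
  rw [hrs, restrictSupport_eq_span, Submodule.span_le]
  rintro _ ⟨m, rfl, rfl⟩
  exact hspan m

theorem finite_homogeneousSubmodule (σ R : Type*) [Finite σ] [CommRing R] (t : ℕ) :
    Module.Finite R (homogeneousSubmodule σ R t) := by
  have := (Finsupp.finite_of_degree_eq (σ := σ) t).to_subtype
  rw [homogeneousSubmodule_eq_finsupp_supported]
  exact Module.Finite.of_basis (basisRestrictSupport R _)

theorem finrank_homogeneousSubmodule_eq_add_ncard {K : Type*} [Field K]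
    {I : Ideal (MvPolynomial σ K)} [Finite σ] {t : ℕ}
    (hspan : homogeneousSubmodule σ K t ≤
      I.restrictScalars K ⊔ restrictSupport K {m | m ∈ s ∧ m.degree = t})
    (hdisj : Disjoint (I.restrictScalars K) (restrictSupport K s)) :
    Module.finrank K (homogeneousSubmodule σ K t) =
      Module.finrank K ↥(homogeneousSubmodule σ K t ⊓ I.restrictScalars K) +
      {m | m ∈ s ∧ m.degree = t}.ncard := by
  have := finite_homogeneousSubmodule σ K t
  set N := restrictSupport K {m | m ∈ s ∧ m.degree = t}
  have hN : N ≤ homogeneousSubmodule σ K t :=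
    (homogeneousSubmodule_eq_finsupp_supported σ K t).symm ▸
      restrictSupport_mono K fun m hm => hm.2
  have : Module.Finite K N := Submodule.finiteDimensional_of_le hN
  have hsup :
      homogeneousSubmodule σ K t ⊓ I.restrictScalars K ⊔ N = homogeneousSubmodule σ K t := by
    rw [inf_sup_assoc_of_le _ hN, inf_eq_left.mpr hspan]
  have hinf : homogeneousSubmodule σ K t ⊓ I.restrictScalars K ⊓ N = ⊥ :=
    (hdisj.mono inf_le_right (restrictSupport_mono K fun m hm => hm.1)).eq_bot
  have hcard : Module.finrank K N = {m | m ∈ s ∧ m.degree = t}.ncard :=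
    Module.finrank_eq_nat_card_basis (basisRestrictSupport K _)
  have hsum := Submodule.finrank_sup_add_finrank_inf_eq
    (homogeneousSubmodule σ K t ⊓ I.restrictScalars K) N
  rwa [hsup, hinf, finrank_bot, hcard, add_zero] at hsum

end StraighteningLaw

section Multichains

variable {σ τ : Type*} (S : σ → Finset τ)

/-- The exponents of the monomials whose variables form a chain, the variable `u` being below
the variable `v` when `S u ⊆ S v`. -/
def multichains : Set (σ →₀ ℕ) := {m | IsChain (fun u v => S u ⊆ S v) (m.support : Set σ)}

/-- The multichains of degree `t` all of whose members are at most `v`. -/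
def multichainsBelow (v : σ) (t : ℕ) : Set (σ →₀ ℕ) :=
  {m | m ∈ multichains S ∧ (∀ u ∈ m.support, S u ⊆ S v) ∧ m.degree = t}

/-- The number of chains of `d` elements lying strictly below `v`. -/
def chainsBelow [Fintype σ] [DecidableEq τ] : ℕ → σ → ℕ
  | 0, _ => 1
  | d + 1, v => ∑ u with S u ⊂ S v, chainsBelow d u

variable {S}

theorem single_add_mem_multichains {v : σ} {m : σ →₀ ℕ} (hm : m ∈ multichains S)
    (h : ∀ u ∈ m.support, S u ⊆ S v) : Finsupp.single v 1 + m ∈ multichains S := by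
  classical
  have hsub : ((Finsupp.single v 1 + m).support : Set σ) ⊆ insert v (m.support : Set σ) := by
    intro u hu
    have := Finsupp.support_add hu
    simpa [Finsupp.support_single] using this
  exact (hm.insert fun u hu _ => Or.inr (h u hu)).mono hsub

theorem exists_eq_single_add_of_mem_multichains {m : σ →₀ ℕ} (hm : m ∈ multichains S)
    (hm0 : m ≠ 0) : ∃ v n, m = Finsupp.single v 1 + n ∧ n ∈ multichains S ∧
      ∀ u ∈ n.support, S u ⊆ S v := by
  obtain ⟨v, hv, hmax⟩ := m.support.exists_max_image (fun u => (S u).card)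
    (Finsupp.support_nonempty_iff.mpr hm0)
  have htop : ∀ u ∈ m.support, S u ⊆ S v := fun u hu => by
    rcases eq_or_ne u v with rfl | huv
    · rfl
    · exact (hm hu hv huv).elim id fun h => (Finset.eq_of_subset_of_card_le h (hmax u hu)).ge
  have hle : Finsupp.single v 1 ≤ m :=
    Finsupp.single_le_iff.mpr (Nat.one_le_iff_ne_zero.mpr (Finsupp.mem_support_iff.mp hv))
  have hsub : (m - Finsupp.single v 1).support ⊆ m.support := Finsupp.support_mono tsub_le_self
  exact ⟨v, m - Finsupp.single v 1, (add_tsub_cancel_of_le hle).symm,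
    hm.mono (Finset.coe_subset.mpr hsub), fun u hu => htop u (hsub hu)⟩

theorem support_linearCombination_single_add {e : σ → τ →₀ ℕ} {v : σ} {m : σ →₀ ℕ}
    (h : ∀ u ∈ m.support, (e u).support ⊆ (e v).support) :
    (Finsupp.linearCombination ℕ e (Finsupp.single v 1 + m)).support = (e v).support := by
  classical
  apply subset_antisymm
  · rw [map_add, Finsupp.linearCombination_single, one_smul]
    refine Finsupp.support_add.trans (Finset.union_subset subset_rfl ?_)
    refine Finsupp.support_sum.trans (Finset.biUnion_subset.mpr fun u hu => ?_)
    exact Finsupp.support_smul.trans (h u hu)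
  · refine Finsupp.support_mono ?_
    rw [map_add, Finsupp.linearCombination_single, one_smul]
    exact le_self_add

theorem injOn_linearCombination_multichains {e : σ → τ →₀ ℕ} (he0 : ∀ v, e v ≠ 0)
    (he : Function.Injective fun v => (e v).support) :
    Set.InjOn (Finsupp.linearCombination ℕ e) (multichains fun v => (e v).support) := by
  have hzero : ∀ v n, Finsupp.linearCombination ℕ e (Finsupp.single v 1 + n) ≠ 0 := fun v n h => by
    rw [map_add, Finsupp.linearCombination_single, one_smul] at h
    exact he0 v (add_eq_zero.mp h).1
  intro m hm
  induction hd : m.degree generalizing m with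
  | zero =>
    intro m' hm' heq
    obtain rfl := (Finsupp.degree_eq_zero_iff m).mp hd
    by_contra hne
    obtain ⟨v, n, rfl, -⟩ := exists_eq_single_add_of_mem_multichains hm' (Ne.symm hne)
    exact hzero v n (by rw [← heq, map_zero])
  | succ d ih =>
    intro m' hm' heq
    obtain ⟨v, n, rfl, hn, hnv⟩ := exists_eq_single_add_of_mem_multichains hm
      (fun h => by simp [h] at hd)
    obtain ⟨v', n', rfl, hn', hnv'⟩ := exists_eq_single_add_of_mem_multichains hm'
      (fun h => hzero v n (by rw [heq, h, map_zero]))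
    obtain rfl : v = v' := he <| by
      simpa only [support_linearCombination_single_add hnv,
        support_linearCombination_single_add hnv'] using congr_arg Finsupp.support heq
    rw [map_add, map_add, add_right_inj] at heq
    rw [ih hn (by simpa [add_comm 1] using hd) hn' heq]

theorem linearIndependent_of_support_subset_total {e : σ → τ →₀ ℕ} (he0 : ∀ v, e v ≠ 0)
    (he : Function.Injective fun v => (e v).support)
    (hchain : ∀ u v, (e u).support ⊆ (e v).support ∨ (e v).support ⊆ (e u).support) :
    LinearIndependent ℕ e := fun _ _ h =>
  injOn_linearCombination_multichains he0 he (fun u _ v _ _ => hchain u v)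
    (fun u _ v _ _ => hchain u v) h

theorem multichainsBelow_zero (v : σ) : multichainsBelow S v 0 = {0} := by
  ext m
  simp only [multichainsBelow, Finsupp.degree_eq_zero_iff, Set.mem_ofPred_eq, Set.mem_singleton_iff]
  refine ⟨fun h => h.2.2, ?_⟩
  rintro rfl
  simp [multichains]

theorem finite_multichainsBelow [Finite σ] (v : σ) (t : ℕ) : (multichainsBelow S v t).Finite :=
  (Finsupp.finite_of_degree_eq t).subset fun _ hm => hm.2.2

theorem multichainsBelow_succ (v : σ) (t : ℕ) : multichainsBelow S v (t + 1) =
    ⋃ u ∈ {u | S u ⊆ S v}, (Finsupp.single u 1 + ·) '' multichainsBelow S u t := by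
  classical
  ext m
  simp only [Set.mem_iUnion, Set.mem_image, exists_prop]
  constructor
  · rintro ⟨hm, hmv, hdeg⟩
    obtain ⟨u, n, rfl, hn, hnu⟩ := exists_eq_single_add_of_mem_multichains hm
      (fun h => by simp [h] at hdeg)
    exact ⟨u, hmv u (by simp), n, ⟨hn, hnu, by simpa [add_comm 1] using hdeg⟩, rfl⟩
  · rintro ⟨u, huv, n, ⟨hn, hnu, hdeg⟩, rfl⟩
    refine ⟨single_add_mem_multichains hn hnu, fun x hx => ?_, by simp [hdeg, add_comm 1]⟩
    rcases Finset.mem_union.mp (Finsupp.support_add hx) with hx | hx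
    · obtain rfl : x = u := by simpa using Finsupp.support_single_subset hx
      exact huv
    · exact (hnu x hx).trans huv

theorem pairwiseDisjoint_single_add_multichainsBelow (hS : Function.Injective S) (t : ℕ)
    (A : Set σ) :
    A.PairwiseDisjoint fun u => (Finsupp.single u 1 + ·) '' multichainsBelow S u t := by
  have htop : ∀ u u' n n', n' ∈ multichainsBelow S u' t →
      Finsupp.single u 1 + n = Finsupp.single u' 1 + n' → S u ⊆ S u' := fun u u' n n' hn' heq => by
    have hu : u ∈ (Finsupp.single u' 1 + n').support := by simp [← heq]
    classical
    rcases Finset.mem_union.mp (Finsupp.support_add hu) with hu | hu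
    · obtain rfl : u = u' := by simpa using Finsupp.support_single_subset hu
      rfl
    · exact hn'.2.1 u hu
  refine fun u _ u' _ huu' => Set.disjoint_left.mpr ?_
  rintro _ ⟨n, hn, rfl⟩ ⟨n', hn', heq⟩
  exact huu' (hS ((htop u u' n n' hn' heq.symm).antisymm (htop u' u n' n hn heq)))

variable [Fintype σ] [DecidableEq τ]

theorem ncard_multichainsBelow_succ (hS : Function.Injective S) (v : σ) (t : ℕ) :
    (multichainsBelow S v (t + 1)).ncard = ∑ u with S u ⊆ S v, (multichainsBelow S u t).ncard := by
  rw [multichainsBelow_succ, Set.Finite.ncard_biUnion (Set.toFinite _)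
    (fun u _ => (finite_multichainsBelow u t).image _)
    (pairwiseDisjoint_single_add_multichainsBelow hS t _)]
  simp only [Set.ncard_image_of_injective _ (add_right_injective _)]
  rw [← finsum_mem_coe_finset]
  simp only [Finset.coe_filter, Finset.mem_univ, true_and]

theorem sum_subset_eq_add_sum_ssubset (hS : Function.Injective S) (g : σ → ℕ) (v : σ) :
    ∑ u with S u ⊆ S v, g u = g v + ∑ u with S u ⊂ S v, g u := by
  classical
  have : ({u | S u ⊆ S v} : Finset σ) = insert v ({u | S u ⊂ S v} : Finset σ) := by
    ext u
    simp [subset_iff_ssubset_or_eq, hS.eq_iff, or_comm]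
  rw [this, Finset.sum_insert (by simp)]

theorem ncard_multichainsBelow (hS : Function.Injective S) (v : σ) (t : ℕ) :
    (multichainsBelow S v t).ncard =
      ∑ d ∈ Finset.range (t + 1), t.choose d * chainsBelow S d v := by
  induction t generalizing v with
  | zero => simp [multichainsBelow_zero, chainsBelow]
  | succ t ih =>
    have hstrict : ∑ u with S u ⊂ S v, (multichainsBelow S u t).ncard =
        ∑ d ∈ Finset.range (t + 1), t.choose d * chainsBelow S (d + 1) v := by
      simp only [ih, chainsBelow, Finset.mul_sum]
      exact Finset.sum_comm
    rw [ncard_multichainsBelow_succ hS, sum_subset_eq_add_sum_ssubset hS, hstrict, ih,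
      Finset.sum_range_succ' (fun d => (t + 1).choose d * _)]
    simp only [Nat.choose_succ_succ, add_mul, Finset.sum_add_distrib]
    rw [Finset.sum_range_succ' (fun d => t.choose d * _),
      Finset.sum_range_succ (fun d => t.choose (d + 1) * _)]
    simp only [Nat.choose_zero_right, one_mul, Nat.choose_succ_self, zero_mul, add_zero]
    ring

theorem chainsBelow_eq_zero (hS : ∀ v, (S v).Nonempty) {d : ℕ} {v : σ} (hd : (S v).card ≤ d) :
    chainsBelow S d v = 0 := by
  induction d generalizing v with
  | zero => exact absurd hd (hS v).card_pos.not_ge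
  | succ d ih =>
    refine Finset.sum_eq_zero fun u hu => ih ?_
    exact Nat.lt_succ_iff.mp ((Finset.card_lt_card (Finset.mem_filter.mp hu).2).trans_le hd)

theorem ncard_multichainsBelow_eq_sum_range_card (hS : Function.Injective S)
    (hne : ∀ v, (S v).Nonempty) (v : σ) (t : ℕ) :
    (multichainsBelow S v t).ncard =
      ∑ d ∈ Finset.range (S v).card, t.choose d * chainsBelow S d v := by
  have hmax : ∀ n ≥ (S v).card, ∑ d ∈ Finset.range n, t.choose d * chainsBelow S d v =
      ∑ d ∈ Finset.range (S v).card, t.choose d * chainsBelow S d v := fun n hn =>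
    (Finset.sum_subset (Finset.range_subset_range.mpr hn) fun d _ hd => by
      rw [chainsBelow_eq_zero hne (by simpa using hd), mul_zero]).symm
  have hchoose : ∀ n ≥ t + 1, ∑ d ∈ Finset.range n, t.choose d * chainsBelow S d v =
      ∑ d ∈ Finset.range (t + 1), t.choose d * chainsBelow S d v := fun n hn =>
    (Finset.sum_subset (Finset.range_subset_range.mpr hn) fun d _ hd => by
      rw [Nat.choose_eq_zero_of_lt (by simpa using hd), zero_mul]).symm
  rw [ncard_multichainsBelow hS, ← hchoose _ (le_max_left _ (S v).card), hmax _ (le_max_right _ _)]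

end Multichains

section QuadraticStraightening

variable {σ τ R : Type*} [CommRing R] {S : σ → Finset τ} {w : σ → ℕ}
  {I : Ideal (MvPolynomial σ R)}

theorem exists_eq_single_add_single_add_of_notMem_multichains {m : σ →₀ ℕ}
    (hm : m ∉ multichains S) : ∃ u v n, ¬S u ⊆ S v ∧ ¬S v ⊆ S u ∧
      m = Finsupp.single u 1 + Finsupp.single v 1 + n := by
  classical
  simp only [multichains, IsChain, Set.Pairwise, Set.mem_ofPred_eq, not_forall, not_or] at hm
  obtain ⟨u, hu, v, hv, huv, hSuv, hSvu⟩ := hm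
  have hle : Finsupp.single u 1 + Finsupp.single v 1 ≤ m := fun x => by
    have hu' := Finsupp.mem_support_iff.mp hu
    have hv' := Finsupp.mem_support_iff.mp hv
    simp only [Finsupp.add_apply, Finsupp.single_apply]
    split_ifs <;> grind
  exact ⟨u, v, _, hSuv, hSvu, (add_tsub_cancel_of_le hle).symm⟩

theorem X_mul_X_mem_restrictSupport {u v : σ} {n : ℕ} (h : w u + w v < n) :
    X u * X v ∈ restrictSupport R {m | m.degree = 2 ∧ Finsupp.weight w m < n} := by
  simp only [X, monomial_mul, mul_one]
  exact (monomial_mem_restrictSupport R).mpr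
    (Or.inl ⟨by simp, by simpa [Finsupp.weight_single] using h⟩)

theorem monomial_mul_mem_sup_restrictSupport {d k : ℕ} {p : MvPolynomial σ R} (n : σ →₀ ℕ)
    (hp : p ∈ I.restrictScalars R ⊔
      restrictSupport R {m | m.degree = d ∧ Finsupp.weight w m < k}) :
    monomial n 1 * p ∈ I.restrictScalars R ⊔ restrictSupport R
      {m | m.degree = d + n.degree ∧ Finsupp.weight w m < k + Finsupp.weight w n} := by
  obtain ⟨q, hq, r, hr, rfl⟩ := Submodule.mem_sup.mp hp
  rw [mul_add]
  refine Submodule.add_mem_sup (I.mul_mem_left _ hq)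
    ((mem_restrictSupport_iff R).mpr fun m hm => ?_)
  obtain ⟨m', hm', rfl⟩ : ∃ m' ∈ r.support, n + m' = m := by
    classical
    obtain ⟨n', hn', m', hm', rfl⟩ := Finset.mem_add.mp (support_mul _ _ hm)
    exact ⟨m', hm', by rw [Finset.mem_singleton.mp (support_monomial_subset hn')]⟩
  obtain ⟨hdeg, hlt⟩ := (mem_restrictSupport_iff R).mp hr hm'
  exact ⟨by simp [hdeg, add_comm], by
    rw [map_add, add_comm]
    exact Nat.add_lt_add_right hlt _⟩

theorem monomial_mem_sup_restrictSupport_multichains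
    (h : ∀ u v, ¬S u ⊆ S v → ¬S v ⊆ S u → X u * X v ∈ I.restrictScalars R ⊔
      restrictSupport R {m | m.degree = 2 ∧ Finsupp.weight w m < w u + w v}) (m : σ →₀ ℕ) :
    monomial m 1 ∈ I.restrictScalars R ⊔
      restrictSupport R {m' | m' ∈ multichains S ∧ m'.degree = m.degree} := by
  refine monomial_mem_sup_restrictSupport (Finsupp.weight w) (fun m hm => ?_) m
  obtain ⟨u, v, n, huv, hvu, rfl⟩ := exists_eq_single_add_single_add_of_notMem_multichains hm
  have := monomial_mul_mem_sup_restrictSupport n (h u v huv hvu)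
  simpa [X, monomial_mul, Finsupp.weight_single, add_comm n] using this

end QuadraticStraightening

section LexLeadingVariables

variable {τ R : Type*} [LinearOrder τ] [WellFoundedGT τ] [CommRing R]

/-- `p` is nonzero and `F` is the set of variables of its lexicographically leading monomial, where
smaller indices denote larger variables. -/
structure HasLeadingVars (p : MvPolynomial τ R) (F : Finset τ) : Prop where
  ne_zero : p ≠ 0
  support_degree : (MonomialOrder.lex.degree p).support = F

namespace HasLeadingVars

variable {p q r : MvPolynomial τ R} {F G : Finset τ} {x : τ}

theorem X [Nontrivial R] (x : τ) : HasLeadingVars (X x : MvPolynomial τ R) {x} :=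
  ⟨X_ne_zero x, by simp [MonomialOrder.degree_X, Finsupp.support_single]⟩

theorem neg (hp : HasLeadingVars p F) : HasLeadingVars (-p) F :=
  ⟨neg_ne_zero.mpr hp.ne_zero, by rw [MonomialOrder.degree_neg, hp.support_degree]⟩

theorem mul [NoZeroDivisors R] (hp : HasLeadingVars p F) (hq : HasLeadingVars q G) :
    HasLeadingVars (p * q) (F ∪ G) :=
  ⟨mul_ne_zero hp.ne_zero hq.ne_zero, by
    rw [MonomialOrder.degree_mul hp.ne_zero hq.ne_zero, ← hp.support_degree,
      ← hq.support_degree]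
    ext
    simp [-not_and, not_and_or]⟩

theorem congr (hp : HasLeadingVars p F) (h : F = G) : HasLeadingVars p G := h ▸ hp

theorem degree_lt_of_mem_supported (hp : HasLeadingVars p F) (hF : F.Nonempty)
    (hr : r ∈ supported R {z | ∃ x ∈ F, x < z}) :
    MonomialOrder.lex.toSyn (MonomialOrder.lex.degree r) <
      MonomialOrder.lex.toSyn (MonomialOrder.lex.degree p) := by
  have hr0 : ∀ z ≤ F.min' hF, MonomialOrder.lex.degree r z = 0 := fun z hz => by
    by_contra hne
    have hrne : r ≠ 0 := by rintro rfl; simp at hne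
    obtain ⟨x, hxF, hxz⟩ := mem_supported.mp hr <| (mem_vars_iff_mem_support z).mpr
      ⟨_, MonomialOrder.degree_mem_support hrne, Finsupp.mem_support_iff.mpr hne⟩
    exact ((hz.trans (F.min'_le x hxF)).trans_lt hxz).false
  have hp0 : ∀ z < F.min' hF, MonomialOrder.lex.degree p z = 0 := fun z hz => by
    rw [← Finsupp.notMem_support_iff, hp.support_degree]
    exact fun h => (F.min'_le z h).not_gt hz
  refine MonomialOrder.lex_lt_iff.mpr ⟨F.min' hF, fun z hz => ?_, ?_⟩
  · exact (hr0 z hz.le).trans (hp0 z hz).symm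
  · exact (hr0 _ le_rfl).trans_lt (Nat.pos_of_ne_zero
      (Finsupp.mem_support_iff.mp (hp.support_degree ▸ F.min'_mem hF)))

theorem add_of_mem_supported (hp : HasLeadingVars p F) (hF : F.Nonempty)
    (hr : r ∈ supported R {z | ∃ x ∈ F, x < z}) : HasLeadingVars (p + r) F := by
  have hlt := hp.degree_lt_of_mem_supported hF hr
  have hdeg := MonomialOrder.degree_add_of_lt hlt
  refine ⟨fun h0 => ?_, hdeg ▸ hp.support_degree⟩
  rw [eq_neg_of_add_eq_zero_left h0, MonomialOrder.degree_neg] at hlt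
  exact hlt.false

theorem sub_of_mem_supported (hp : HasLeadingVars p F) (hF : F.Nonempty)
    (hr : r ∈ supported R {z | ∃ x ∈ F, x < z}) : HasLeadingVars (p - r) F :=
  sub_eq_add_neg p r ▸ hp.add_of_mem_supported hF (neg_mem hr)

end HasLeadingVars

end LexLeadingVariables

theorem add_choose_eq_sum_range_choose_mul_choose (t : ℕ) {k n : ℕ} (h : k < n) :
    (t + k).choose k = ∑ d ∈ Finset.range n, t.choose d * k.choose d := by
  rw [Nat.add_choose_eq, Finset.Nat.sum_antidiagonal_eq_sum_range_succ_mk]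
  refine (Finset.sum_congr rfl fun d hd => ?_).trans
    (Finset.sum_subset (Finset.range_subset_range.mpr h) fun d _ hd => ?_)
  · rw [Nat.choose_symm (Finset.mem_range_succ_iff.mp hd)]
  · rw [(Nat.choose_eq_zero_of_lt (by simpa using hd) : k.choose d = 0), mul_zero]

section Parametrization

variable {R : Type*} [CommRing R]

/-- A point `(ω, v)` of the affine cone over the base locus: `ω = s • a ∧ b` and
`v (k + 2) = (a 0 * b 1 - a 1 * b 0) * t k`, the entries `v 0` and `v 1` being given by Cramer's
rule so that `v` is orthogonal to `a` and `b`. -/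
def conePoint (s : R) (a b : Fin 6 → R) (t : Fin 4 → R) : Fin 21 → R :=
  let ω : Fin 6 → Fin 6 → R := fun i j => s * (a i * b j - a j * b i)
  let α := a 2 * t 0 + (a 3 * t 1 + a 4 * t 2 + a 5 * t 3)
  let β := b 2 * t 0 + (b 3 * t 1 + b 4 * t 2 + b 5 * t 3)
  let v : Fin 6 → R := ![a 1 * β - b 1 * α, b 0 * α - a 0 * β, (a 0 * b 1 - a 1 * b 0) * t 0,
    (a 0 * b 1 - a 1 * b 0) * t 1, (a 0 * b 1 - a 1 * b 0) * t 2, (a 0 * b 1 - a 1 * b 0) * t 3]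
  ![ω 0 1, ω 0 2, ω 0 3, ω 0 4, ω 1 2, ω 1 3, ω 2 3, -v 5, ω 1 4, ω 2 4, ω 3 4, ω 0 5, v 4, v 0,
    ω 1 5, ω 2 5, ω 3 5, -v 3, v 2, -v 1, ω 4 5]

theorem aeval_conePoint_omegaP20 [Algebra ℚ R] (s : R) (a b : Fin 6 → R) (t : Fin 4 → R)
    (i : Fin 21) : aeval (conePoint s a b t) (omegaP20 i) = 0 := by
  fin_cases i <;>
    simp only [omegaP20, y, conePoint, Fin.reduceFinMk, Fin.zero_eta, Fin.mk_one, Fin.isValue,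
      Matrix.cons_val, Matrix.cons_val_zero, Matrix.cons_val_one, map_add, map_sub, map_mul,
      aeval_X] <;>
    ring

end Parametrization

/-- A family of points of the cone in 13 parameters that dominates it. The parameters are replaced
by products of consecutive variables so that the leading monomials of the coordinates are squarefree
and are determined by their sets of variables. -/
def genericConePoint : Fin 21 → MvPolynomial (Fin 13) ℚ :=
  conePoint (X 12)
    ![X 0 * X 1 * X 2 * X 3, X 1 * X 2 * X 3, X 2 * X 3, X 3, 1, 0]
    ![0, X 4 * X 5 * X 6 * X 7, X 5 * X 6 * X 7, X 6 * X 7, X 7, 1]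
    ![X 11 * X 12, X 10 * X 11 * X 12, X 9 * X 10 * X 11 * X 12, X 8 * X 9 * X 10 * X 11 * X 12]

/-- The set of variables of the lexicographically leading monomial of each coordinate of
`genericConePoint`. -/
def leadVars : Fin 21 → Finset (Fin 13) :=
  let F (i j k : Fin 13) := Finset.Ico i 4 ∪ Finset.Ico j 8 ∪ Finset.Ici k
  ![F 0 4 12, F 0 5 12, F 0 6 12, F 0 7 12, F 1 5 12, F 1 6 12, F 2 6 12, F 0 4 8, F 1 7 12,
    F 2 7 12, F 3 7 12, F 0 8 12, F 0 4 9, F 1 5 11, F 1 8 12, F 2 8 12, F 3 8 12, F 0 4 10,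
    F 0 4 11, F 0 5 11, F 4 8 12]

theorem hasLeadingVars_genericConePoint (v : Fin 21) :
    HasLeadingVars (genericConePoint v) (leadVars v) := by
  fin_cases v <;>
    simp only [genericConePoint, conePoint, Fin.isValue, Matrix.cons_val_zero, Matrix.cons_val_one,
      mul_zero, sub_zero, Matrix.cons_val, one_mul, zero_mul, add_zero, zero_sub, mul_one, neg_neg,
      Fin.reduceFinMk, Fin.zero_eta, Fin.mk_one] <;>
    apply HasLeadingVars.congr
  -- In every sum the variable of smallest index occurs only in the first term.
  all_goals repeat' first
    | apply HasLeadingVars.X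
    | apply HasLeadingVars.neg
    | apply HasLeadingVars.mul
    | apply HasLeadingVars.sub_of_mem_supported
    | apply HasLeadingVars.add_of_mem_supported
    | apply mul_mem
    | apply add_mem
    | refine X_mem_supported.mpr ?_
  all_goals decide

theorem injective_leadVars : Function.Injective leadVars := by
  decide

theorem nonempty_leadVars : ∀ v, (leadVars v).Nonempty := by
  decide +kernel

/-- The weight `k * (13 - k)` of an element of rank `k` in the lattice of the sets `leadVars v`.
Concavity makes it decrease when two elements are replaced by a pair with the same total rank that
lies further apart. -/
def rankWeight (v : Fin 21) : ℕ := (leadVars v).card * (leadVars v)ᶜ.card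

/-- The incomparable pair of coordinates whose product is rewritten by the quadric
`omegaP20 i`. -/
def leadPair : Fin 21 → Fin 21 × Fin 21 :=
  ![(10, 15), (10, 14), (9, 14), (6, 14), (11, 13), (3, 13), (2, 13), (1, 13), (0, 13), (10, 11),
    (9, 11), (8, 11), (0, 19), (6, 11), (5, 11), (4, 11), (6, 8), (3, 6), (3, 5), (3, 4), (2, 4)]

theorem exists_leadPair_eq : ∀ u v, ¬leadVars u ⊆ leadVars v → ¬leadVars v ⊆ leadVars u →
    ∃ i, leadPair i = (u, v) ∨ leadPair i = (v, u) := by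
  decide +kernel

theorem rankWeight_eq : rankWeight =
    ![36, 40, 42, 42, 42, 42, 40, 0, 40, 36, 30, 40, 12, 40, 36, 30, 22, 22, 30, 36, 12] := by
  decide +kernel

theorem map_X_mul_X_leadPair_eq_zero {M : Type*} [AddCommGroup M] [Module ℚ M]
    (π : MvPolynomial (Fin 21) ℚ →ₗ[ℚ] M) (i : Fin 21) (hquad : π (omegaP20 i) = 0)
    (hlower : ∀ a b, rankWeight a + rankWeight b <
      rankWeight (leadPair i).1 + rankWeight (leadPair i).2 → π (X a * X b) = 0) :
    π (X (leadPair i).1 * X (leadPair i).2) = 0 := by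
  fin_cases i <;> simpa [omegaP20, y, leadPair, hlower, rankWeight_eq] using hquad

theorem X_mul_X_leadPair_mem_sup (i : Fin 21) :
    X (leadPair i).1 * X (leadPair i).2 ∈ idealOmegaP20.restrictScalars ℚ ⊔ restrictSupport ℚ
      {m | m.degree = 2 ∧ Finsupp.weight rankWeight m <
        rankWeight (leadPair i).1 + rankWeight (leadPair i).2} := by
  rw [← Submodule.Quotient.mk_eq_zero, ← Submodule.mkQ_apply]
  refine map_X_mul_X_leadPair_eq_zero _ i ?_ fun a b h => ?_ <;>
    rw [Submodule.mkQ_apply, Submodule.Quotient.mk_eq_zero]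
  · exact Submodule.mem_sup_left (Ideal.subset_span ⟨i, rfl⟩)
  · exact Submodule.mem_sup_right (X_mul_X_mem_restrictSupport h)

theorem support_degree_genericConePoint (v : Fin 21) :
    (MonomialOrder.lex.degree (genericConePoint v)).support = leadVars v :=
  (hasLeadingVars_genericConePoint v).support_degree

theorem genericConePoint_ne_zero (v : Fin 21) : genericConePoint v ≠ 0 :=
  (hasLeadingVars_genericConePoint v).ne_zero

theorem degree_genericConePoint_ne_zero (v : Fin 21) :
    MonomialOrder.lex.degree (genericConePoint v) ≠ 0 := fun h => by
  have := support_degree_genericConePoint v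
  rw [h] at this
  exact (nonempty_leadVars v).ne_empty (this.symm.trans Finsupp.support_zero)

theorem injOn_degree_genericConePoint :
    Set.InjOn (Finsupp.linearCombination ℕ fun v => MonomialOrder.lex.degree (genericConePoint v))
      (multichains leadVars) := by
  have := injOn_linearCombination_multichains degree_genericConePoint_ne_zero
  simp only [support_degree_genericConePoint] at this
  exact this injective_leadVars

theorem monomial_mem_idealOmegaP20_sup (m : Fin 21 →₀ ℕ) :
    monomial m 1 ∈ idealOmegaP20.restrictScalars ℚ ⊔
      restrictSupport ℚ {m' | m' ∈ multichains leadVars ∧ m'.degree = m.degree} := by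
  refine monomial_mem_sup_restrictSupport_multichains (w := rankWeight) (fun u v huv hvu => ?_) m
  obtain ⟨i, hi | hi⟩ := exists_leadPair_eq u v huv hvu
  · simpa only [hi] using X_mul_X_leadPair_mem_sup i
  · simpa only [hi, mul_comm (X v), add_comm (rankWeight v)] using X_mul_X_leadPair_mem_sup i

theorem idealOmegaP20_eq_ker : idealOmegaP20 = RingHom.ker (aeval (R := ℚ) genericConePoint) := by
  refine eq_of_le_of_disjoint_restrictSupport ?_
    (disjoint_ker_aeval_restrictSupport MonomialOrder.lex genericConePoint_ne_zero
      injOn_degree_genericConePoint) fun m => ?_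
  · rw [idealOmegaP20, Ideal.span_le]
    rintro _ ⟨i, rfl⟩
    exact aeval_conePoint_omegaP20 _ _ _ _ i
  · exact sup_le_sup_left (restrictSupport_mono ℚ fun _ hm => hm.1) _
      (monomial_mem_idealOmegaP20_sup m)

theorem idealOmegaP20Sat_eq : idealOmegaP20Sat = idealOmegaP20 := by
  have : idealOmegaP20.IsPrime := idealOmegaP20_eq_ker ▸ RingHom.ker_isPrime _
  refine iSup_colon_pow_eq_self fun h => genericConePoint_ne_zero 0 ?_
  have := h (Ideal.subset_span ⟨0, rfl⟩)
  rwa [idealOmegaP20_eq_ker, RingHom.mem_ker, aeval_X] at this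

/-- A maximal chain in the lattice of the sets `leadVars v`; its coordinates form a transcendence
basis. -/
def maximalChain : Fin 13 → Fin 21 := ![20, 16, 10, 9, 8, 3, 2, 1, 0, 18, 17, 12, 7]

theorem algebraicIndependent_genericConePoint_maximalChain :
    AlgebraicIndependent ℚ (genericConePoint ∘ maximalChain) := by
  refine algebraicIndependent_of_linearIndependent_degree MonomialOrder.lex
    (fun k => genericConePoint_ne_zero _) ?_
  refine linearIndependent_of_support_subset_total (fun k => degree_genericConePoint_ne_zero _)
    ?_ ?_ <;>
    simp only [Function.comp_apply, support_degree_genericConePoint]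
  · decide +kernel
  · decide +kernel

theorem ringKrullDim_quotient_idealOmegaP20 :
    ringKrullDim (MvPolynomial (Fin 21) ℚ ⧸ idealOmegaP20) = (13 : ℕ) := by
  have hx : aeval (R := ℚ) genericConePoint ∘ (fun k => X (maximalChain k)) =
      genericConePoint ∘ maximalChain := funext fun k => aeval_X _ _
  rw [idealOmegaP20_eq_ker, ringKrullDim_quotient_ker (aeval genericConePoint)
    (hx ▸ algebraicIndependent_genericConePoint_maximalChain), Nat.card_fin]

theorem chainsBelow_leadVars : ∀ d ∈ Finset.range 13, (chainsBelow leadVars d 7 : ℤ) =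
    Nat.choose 8 d - 12 * Nat.choose 9 d + 45 * Nat.choose 10 d - 66 * Nat.choose 11 d +
      33 * Nat.choose 12 d := by
  decide +kernel

theorem setOf_multichains_leadVars_degree_eq (t : ℕ) :
    {m | m ∈ multichains leadVars ∧ m.degree = t} = multichainsBelow leadVars 7 t := by
  have htop : ∀ u, leadVars u ⊆ leadVars 7 := by decide +kernel
  ext m
  exact and_congr_right fun _ => (and_iff_right fun u _ => htop u).symm

theorem disjoint_idealOmegaP20_restrictSupport :
    Disjoint (idealOmegaP20.restrictScalars ℚ) (restrictSupport ℚ (multichains leadVars)) :=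
  idealOmegaP20_eq_ker ▸ disjoint_ker_aeval_restrictSupport MonomialOrder.lex
    genericConePoint_ne_zero injOn_degree_genericConePoint

theorem finrank_homogeneousSubmodule_eq_add_sum_chainsBelow (t : ℕ) :
    Module.finrank ℚ (homogeneousSubmodule (Fin 21) ℚ t) =
      Module.finrank ℚ ↥(homogeneousSubmodule (Fin 21) ℚ t ⊓ idealOmegaP20.restrictScalars ℚ) +
      ∑ d ∈ Finset.range 13, t.choose d * chainsBelow leadVars d 7 := by
  have hcard : (leadVars 7).card = 13 := by decide +kernel
  rw [finrank_homogeneousSubmodule_eq_add_ncard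
      (homogeneousSubmodule_le_sup_restrictSupport monomial_mem_idealOmegaP20_sup t)
      disjoint_idealOmegaP20_restrictSupport,
    setOf_multichains_leadVars_degree_eq,
    ncard_multichainsBelow_eq_sum_range_card injective_leadVars nonempty_leadVars, hcard]

theorem sum_choose_mul_chainsBelow_leadVars (t : ℕ) :
    ((∑ d ∈ Finset.range 13, t.choose d * chainsBelow leadVars d 7 : ℕ) : ℤ) =
      ((t + 8).choose 8 : ℤ) - 12 * ((t + 9).choose 9 : ℤ) +
        45 * ((t + 10).choose 10 : ℤ) - 66 * ((t + 11).choose 11 : ℤ) +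
        33 * ((t + 12).choose 12 : ℤ) := by
  have hbound (k : ℕ) (hk : k < 13) : ((t + k).choose k : ℤ) =
      ∑ d ∈ Finset.range 13, (t.choose d * k.choose d : ℤ) :=
    mod_cast add_choose_eq_sum_range_choose_mul_choose t hk
  rw [hbound 8 (by norm_num), hbound 9 (by norm_num), hbound 10 (by norm_num),
    hbound 11 (by norm_num), hbound 12 (by norm_num)]
  simp only [Nat.cast_sum, Nat.cast_mul, Finset.mul_sum, ← Finset.sum_add_distrib,
    ← Finset.sum_sub_distrib]
  refine Finset.sum_congr rfl fun d hd => ?_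
  rw [chainsBelow_leadVars d hd]
  ring

/-- The base locus of the Cremona transformation of `ℙ²⁰` defined by the 21 quadrics
of equation (3) has dimension `12` (its affine cone has Krull dimension `13`) and
degree `33`, with Hilbert polynomial
`P(t) = C(t+8,8) − 12·C(t+9,9) + 45·C(t+10,10) − 66·C(t+11,11) + 33·C(t+12,12)`. -/
theorem base_locus_cremonaP20 :
    ringKrullDim (MvPolynomial (Fin 21) ℚ ⧸ idealOmegaP20Sat) = (13 : ℕ) ∧
    ∃ N : ℕ, ∀ t ≥ N,
      ((Module.finrank ℚ ↥(homogeneousSubmodule (Fin 21) ℚ t) : ℤ) -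
        (Module.finrank ℚ ↥(homogeneousSubmodule (Fin 21) ℚ t ⊓
          Submodule.restrictScalars ℚ idealOmegaP20Sat) : ℤ)) =
      ((t + 8).choose 8 : ℤ) - 12 * ((t + 9).choose 9 : ℤ) +
        45 * ((t + 10).choose 10 : ℤ) - 66 * ((t + 11).choose 11 : ℤ) +
        33 * ((t + 12).choose 12 : ℤ) := by
  rw [idealOmegaP20Sat_eq]
  refine ⟨ringKrullDim_quotient_idealOmegaP20, 0, fun t _ => ?_⟩
  rw [← sum_choose_mul_chainsBelow_leadVars, sub_eq_iff_eq_add']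
  exact_mod_cast finrank_homogeneousSubmodule_eq_add_sum_chainsBelow t

end
end
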